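/- arXiv:1901.05368 — 4 statements merged into one kernel-verified Lean document; each statement's English description precedes it below -/
import Mathlib

section
/- Let p be a prime and let k' be a finite Galois extension of Q_p. Then every field automorphism of k' fixes Q_p pointwise. In particular, Q_p is a rigid field. -/
/-!
A `p`-adic unit `u` satisfies `‖u ^ (p - 1) - 1‖ < 1`, so by Hensel's lemma `u ^ (p - 1)` is an
`m`-th power for every `m` prime to `p`. Multiplicative maps preserve this divisibility, but in the
value group `ℤ` only `0` is divisible by infinitely many `m`; hence every multiplicative map from
`ℤ_[p]ˣ` to a field `ℚ_[q]` takes values of norm one.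

Given a ring homomorphism `f : ℚ_[p] →+* K` into a finite extension `K` of `ℚ_[p]`, applying this to
the composite of `f` with the field norm of `K / ℚ_[p]` shows that `f` is isometric for the
spectral norm of `K`. So `f` is continuous, and it is determined by its values on the dense
subfield `ℚ`.
-/

open Filter Module Polynomial

section Padic

variable {p q : ℕ} [Fact p.Prime] [Fact q.Prime]

theorem padicInt_exists_units_pow_eq {u : ℤ_[p]ˣ} (hu : ‖(u - 1 : ℤ_[p])‖ < 1) {m : ℕ}
    (hm : p.Coprime m) : ∃ z : ℤ_[p]ˣ, z ^ m = u := by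
  have hm_norm : ‖(m : ℤ_[p])‖ = 1 := PadicInt.norm_natCast_eq_one_iff.2 hm
  have hm_ne : m ≠ 0 := by
    rintro rfl
    simp at hm_norm
  obtain ⟨z, hz, -⟩ := hensels_lemma (F := X ^ m - C (u : ℤ_[p])) (a := (1 : ℤ_[p])) <| by
    simpa [hm_norm, derivative_X_pow, norm_sub_rev] using hu
  have hzu : z ^ m = u := by simpa [sub_eq_zero] using hz
  obtain ⟨w, rfl⟩ : IsUnit z := (isUnit_pow_iff hm_ne).1 (hzu ▸ u.isUnit)
  exact ⟨w, Units.ext (by simpa using hzu)⟩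

theorem padicInt_norm_units_pow_sub_one_lt_one (u : ℤ_[p]ˣ) :
    ‖((u ^ (p - 1) : ℤ_[p]ˣ) - 1 : ℤ_[p])‖ < 1 := by
  have hu : PadicInt.toZMod (u : ℤ_[p]) ≠ 0 := (u.isUnit.map PadicInt.toZMod).ne_zero
  rw [← PadicInt.mem_nonunits, ← IsLocalRing.mem_maximalIdeal, ← PadicInt.ker_toZMod,
    RingHom.mem_ker, map_sub, Units.val_pow_eq_pow_val, map_pow, ZMod.pow_card_sub_one_eq_one hu,
    map_one, sub_self]

theorem padic_norm_eq_one_of_frequently_pow_eq {x : ℚ_[p]} (hx : x ≠ 0)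
    (h : ∃ᶠ m : ℕ in atTop, ∃ y : ℚ_[p], y ^ m = x) : ‖x‖ = 1 := by
  obtain ⟨m, hm, y, rfl⟩ := frequently_atTop'.1 h x.valuation.natAbs
  have hdvd : (m : ℤ) ∣ (y ^ m).valuation := ⟨y.valuation, Padic.valuation_pow y m⟩
  have hval : (y ^ m).valuation = 0 := Int.eq_zero_of_dvd_of_natAbs_lt_natAbs hdvd hm
  rw [Padic.norm_eq_zpow_neg_valuation hx, hval, neg_zero, zpow_zero]

theorem norm_monoidHom_padicInt_units (φ : ℤ_[p]ˣ →* ℚ_[q]) (u : ℤ_[p]ˣ) : ‖φ u‖ = 1 := by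
  have hp : p.Prime := Fact.out
  have hroots : ∃ᶠ m : ℕ in atTop, ∃ y : ℚ_[q], y ^ m = φ (u ^ (p - 1)) := by
    refine frequently_atTop.2 fun n ↦
      ⟨p * n + 1, (Nat.le_mul_of_pos_left n hp.pos).trans (Nat.le_succ _), ?_⟩
    obtain ⟨z, hz⟩ := padicInt_exists_units_pow_eq
      (padicInt_norm_units_pow_sub_one_lt_one u) (m := p * n + 1) (by simp)
    exact ⟨φ z, by rw [← map_pow, hz]⟩
  have hpow : ‖φ u‖ ^ (p - 1) = 1 := by
    rw [← norm_pow, ← map_pow]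
    exact padic_norm_eq_one_of_frequently_pow_eq ((Group.isUnit _).map φ).ne_zero hroots
  exact (pow_eq_one_iff_of_nonneg (norm_nonneg _) (Nat.sub_pos_of_lt hp.one_lt).ne').1 hpow

theorem padic_exists_eq_units_mul_zpow_valuation {x : ℚ_[p]} (hx : x ≠ 0) :
    ∃ u : ℤ_[p]ˣ, x = (u : ℤ_[p]) * (p : ℚ_[p]) ^ x.valuation := by
  have hp : (p : ℚ_[p]) ≠ 0 := NeZero.ne _
  have hp_real : (p : ℝ) ≠ 0 := by exact_mod_cast hp
  have hnorm : ‖x * (p : ℚ_[p]) ^ (-x.valuation)‖ = 1 := by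
    rw [norm_mul, Padic.norm_p_zpow, Padic.norm_eq_zpow_neg_valuation hx, neg_neg,
      ← zpow_add₀ hp_real, neg_add_cancel, zpow_zero]
  refine ⟨PadicInt.mkUnits hnorm, ?_⟩
  rw [PadicInt.mkUnits_eq, mul_assoc, ← zpow_add₀ hp, neg_add_cancel, zpow_zero, mul_one]

theorem norm_monoidWithZeroHom_padic (φ : ℚ_[p] →*₀ ℚ_[q]) {x : ℚ_[p]} (hx : x ≠ 0) :
    ‖φ x‖ = ‖φ p‖ ^ x.valuation := by
  obtain ⟨u, hu⟩ := padic_exists_eq_units_mul_zpow_valuation hx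
  have hφu : ‖φ (u : ℤ_[p])‖ = 1 := norm_monoidHom_padicInt_units
    ((φ : ℚ_[p] →* ℚ_[q]).comp (PadicInt.Coe.ringHom.toMonoidHom.comp (Units.coeHom _))) u
  calc ‖φ x‖ = ‖φ ((u : ℤ_[p]) * (p : ℚ_[p]) ^ x.valuation)‖ := congrArg (‖φ ·‖) hu
    _ = ‖φ p‖ ^ x.valuation := by rw [map_mul, map_zpow₀, norm_mul, norm_zpow, hφu, one_mul]

theorem padic_ringHom_ext {R : Type*} [Ring R] [TopologicalSpace R] [T2Space R]
    {f g : ℚ_[p] →+* R} (hf : Continuous f) (hg : Continuous g) : f = g :=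
  RingHom.coe_inj <| (Padic.denseRange_ratCast p).equalizer hf hg <| funext fun r ↦
    RingHom.congr_fun (Subsingleton.elim (f.comp (Rat.castHom ℚ_[p])) (g.comp (Rat.castHom _))) r

end Padic

theorem spectralNorm_pow_finrank (K L : Type*) [NontriviallyNormedField K] [CompleteSpace K]
    [IsUltrametricDist K] [Field L] [Algebra K L] [FiniteDimensional K L] (x : L) :
    spectralNorm K L x ^ finrank K L = ‖Algebra.norm K x‖ := by
  have hx : IsIntegral K x := Algebra.IsIntegral.isIntegral x
  have hdeg : (minpoly K x).natDegree ≠ 0 := (minpoly.natDegree_pos hx).ne'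
  have hcoeff : spectralNorm K L x ^ (minpoly K x).natDegree = ‖(minpoly K x).coeff 0‖ := by
    rw [spectralNorm.spectralNorm_eq_norm_coeff_zero_rpow, one_div,
      Real.rpow_inv_natCast_pow (norm_nonneg _) hdeg]
  have hgen : ‖Algebra.norm K (IntermediateField.AdjoinSimple.gen K x)‖ =
      ‖(minpoly K x).coeff 0‖ := by
    rw [← IntermediateField.adjoin.powerBasis_gen hx,
      Algebra.PowerBasis.norm_gen_eq_coeff_zero_minpoly, IntermediateField.adjoin.powerBasis_gen,
      IntermediateField.minpoly_gen, norm_mul, norm_pow, norm_neg, norm_one, one_pow, one_mul]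
  rw [Algebra.norm_eq_norm_adjoin, norm_pow, hgen, ← hcoeff, ← pow_mul,
    ← IntermediateField.adjoin.finrank hx, finrank_mul_finrank]

section FiniteExtension

variable {p : ℕ} [Fact p.Prime] {K : Type*} [Field K] [Algebra ℚ_[p] K]
  [FiniteDimensional ℚ_[p] K]

theorem norm_algebraNorm_padic_ringHom (f : ℚ_[p] →+* K) (x : ℚ_[p]) :
    ‖Algebra.norm ℚ_[p] (f x)‖ = ‖x‖ ^ finrank ℚ_[p] K := by
  rcases eq_or_ne x 0 with rfl | hx
  · simp [finrank_pos.ne']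
  let φ : ℚ_[p] →*₀ ℚ_[p] :=
    { (Algebra.norm ℚ_[p]).comp (f : ℚ_[p] →* K) with map_zero' := by simp }
  calc ‖φ x‖ = ‖φ p‖ ^ x.valuation := norm_monoidWithZeroHom_padic φ hx
    _ = (‖(p : ℚ_[p])‖ ^ finrank ℚ_[p] K) ^ x.valuation := by
      rw [← norm_pow, ← Algebra.norm_natCast, ← map_natCast f]
      rfl
    _ = ‖x‖ ^ finrank ℚ_[p] K := by
      rw [Padic.norm_eq_zpow_neg_valuation hx, Padic.norm_p, ← zpow_natCast, ← zpow_natCast,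
        ← zpow_mul, ← zpow_mul, inv_zpow', mul_comm, neg_mul_eq_neg_mul]

theorem spectralNorm_padic_ringHom (f : ℚ_[p] →+* K) (x : ℚ_[p]) :
    spectralNorm ℚ_[p] K (f x) = ‖x‖ := by
  have hrank : finrank ℚ_[p] K ≠ 0 := finrank_pos.ne'
  rw [← pow_left_inj₀ (spectralNorm_nonneg _) (norm_nonneg x) hrank, spectralNorm_pow_finrank,
    norm_algebraNorm_padic_ringHom]

theorem padic_rigid_general (f g : ℚ_[p] →+* K) : f = g := by
  let : NormedField K := spectralNorm.normedField ℚ_[p] K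
  have hcont (h : ℚ_[p] →+* K) : Continuous h :=
    (AddMonoidHomClass.isometry_of_norm h (spectralNorm_padic_ringHom h)).continuous
  exact padic_ringHom_ext (hcont f) (hcont g)

end FiniteExtension

/-- Let `p` be a prime and `k'` a finite Galois extension of `ℚ_p`. Then every
field automorphism of `k'` fixes `ℚ_p` pointwise. In particular (since this holds for every
finite Galois extension of `ℚ_p`, and such extensions are never algebraically closed), `ℚ_p`
is a rigid field. -/
theorem padic_rigid (p : ℕ) [Fact p.Prime]
    (k' : Type*) [Field k'] [Algebra ℚ_[p] k'] [FiniteDimensional ℚ_[p] k'] [IsGalois ℚ_[p] k']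
    (σ : k' ≃+* k') :
    ∀ x : ℚ_[p], σ (algebraMap ℚ_[p] k' x) = algebraMap ℚ_[p] k' x :=
  RingHom.congr_fun
    (padic_rigid_general (σ.toRingHom.comp (algebraMap ℚ_[p] k')) (algebraMap ℚ_[p] k'))
end

section
/- Let K = F_{p^i}((T)), let q be a prime, and let a ∈ ℕ. There exists a subfield K' ≤ K such that K/K' is a finite Galois extension with q^a dividing [K:K'] if and only if q = p or q^a divides i(p^i − 1). -/
/-! By Artin's theorem, the Galois subfields of finite index in `F⸨X⸩` correspond to the finite
groups of automorphisms of `F⸨X⸩`. If `F` is algebraic over `𝔽_p`, such an automorphism preserves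
`F⟦X⟧`: it sends one-units, which have `n`-th roots for all `n` prime to `p`, to series of valuation
zero, and constants, which are integral over `ℤ`, to integral series. The leading term of an
automorphism of `F⟦X⟧` lies in the semilinear group `ΓL₁(F) = Fˣ ⋊ Aut F`. This homomorphism is
split by the semilinear substitutions `X ↦ c * X`, and its kernel has no torsion prime to `p`, so
for `q ≠ p` the orders of finite `q`-groups of automorphisms are those of `q`-subgroups of `ΓL₁(F)`.

For `q = p`, let `V` be a finite additive group of polynomials over `F`. The equation
`x⁻¹ = ∏ v ∈ V, (X⁻¹ - v(x))` has a unique solution `x` in `F⟦X⟧`. It is invariant under the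
substitutions `X⁻¹ ↦ X⁻¹ + v(x)`, which therefore compose like the elements of `V`. -/

namespace LaurentGalois

section Subgroups

theorem exists_subgroup_card_eq_of_injective {G G' : Type*} [Group G] [Group G'] {f : G →* G'}
    (hf : Function.Injective f) {n : ℕ} (h : ∃ H : Subgroup G, Nat.card H = n) :
    ∃ H : Subgroup G', Nat.card H = n := by
  obtain ⟨H, rfl⟩ := h
  exact ⟨H.map f, Subgroup.card_map_of_injective hf⟩

theorem exists_subgroup_card_eq_iff_of_mulEquiv {G G' : Type*} [Group G] [Group G'] (e : G ≃* G')
    {n : ℕ} : (∃ H : Subgroup G, Nat.card H = n) ↔ ∃ H : Subgroup G', Nat.card H = n :=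
  ⟨exists_subgroup_card_eq_of_injective (f := e.toMonoidHom) e.injective,
    exists_subgroup_card_eq_of_injective (f := e.symm.toMonoidHom) e.symm.injective⟩

theorem exists_subgroup_card_eq_prime_pow_iff {G : Type*} [Group G] [Finite G] {q : ℕ}
    (hq : q.Prime) {a : ℕ} : (∃ H : Subgroup G, Nat.card H = q ^ a) ↔ q ^ a ∣ Nat.card G := by
  have : Fact q.Prime := ⟨hq⟩
  refine ⟨?_, Sylow.exists_subgroup_card_pow_prime q⟩
  rintro ⟨H, hH⟩
  exact hH ▸ H.card_subgroup_dvd_card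

theorem exists_isGalois_subfield_iff_exists_subgroup {K : Type*} [Field K] {q : ℕ}
    (hq : q.Prime) {a : ℕ} :
    (∃ K' : Subfield K, FiniteDimensional K' K ∧ IsGalois K' K ∧ q ^ a ∣ Module.finrank K' K) ↔
      ∃ H : Subgroup (RingAut K), Nat.card H = q ^ a := by
  constructor
  · rintro ⟨K', _, _, hdvd⟩
    rw [← IsGalois.card_aut_eq_finrank, ← exists_subgroup_card_eq_prime_pow_iff hq] at hdvd
    exact exists_subgroup_card_eq_of_injective
      (f := MulSemiringAction.toRingAut (K ≃ₐ[K'] K) K)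
      (fun σ τ h => AlgEquiv.ext fun x => RingEquiv.congr_fun h x) hdvd
  · rintro ⟨H, hH⟩
    have : Finite H := Nat.finite_of_card_ne_zero (hH ▸ pow_ne_zero a hq.ne_zero)
    cases nonempty_fintype H
    refine ⟨FixedPoints.subfield H K, inferInstance, inferInstance, ?_⟩
    rw [FixedPoints.finrank_eq_card, ← Nat.card_eq_fintype_card, hH]

/-- The action by automorphisms defined by a representation of a group by ring endomorphisms,
which are automatically invertible. -/
def toRingAut {G R : Type*} [Group G] [Semiring R] (ρ : G →* (R →+* R)) : G →* RingAut R :=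
  letI := MulSemiringAction.compHom R ρ
  MulSemiringAction.toRingAut G R

@[simp]
theorem toRingAut_apply {G R : Type*} [Group G] [Semiring R] (ρ : G →* (R →+* R)) (g : G) (x : R) :
    toRingAut ρ g x = ρ g x := rfl

end Subgroups

section Adic

variable {R : Type*} [CommRing R] {I : Ideal R}

theorem existsUnique_fixedPoint_of_adic_contraction {M : Type*} [AddCommGroup M] [Module R M]
    [IsAdicComplete I M] {Φ : M → M}
    (hΦ : ∀ n x y, x ≡ y [SMOD (I ^ n • ⊤ : Submodule R M)] →
      Φ x ≡ Φ y [SMOD (I ^ (n + 1) • ⊤ : Submodule R M)]) :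
    ∃! x, Φ x = x := by
  have iterate_succ : ∀ n, Φ^[n] 0 ≡ Φ^[n + 1] 0 [SMOD (I ^ n • ⊤ : Submodule R M)] := by
    intro n
    induction n with
    | zero => simp
    | succ n ih => simpa only [Function.iterate_succ_apply'] using hΦ n _ _ ih
  have cauchy : ∀ {m n}, m ≤ n → Φ^[m] 0 ≡ Φ^[n] 0 [SMOD (I ^ m • ⊤ : Submodule R M)] := by
    intro m n hmn
    induction n, hmn using Nat.le_induction with
    | base => rfl
    | succ n hmn ih =>
      exact ih.trans ((iterate_succ n).mono (Submodule.smul_mono_left (Ideal.pow_le_pow_right hmn)))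
  obtain ⟨x, hx⟩ := IsPrecomplete.prec ‹IsAdicComplete I M›.toIsPrecomplete cauchy
  have hfix : Φ x = x := IsHausdorff.eq_iff_smodEq (I := I).2 fun n => by
    have := hΦ n _ _ (hx n).symm
    rw [← Function.iterate_succ_apply' Φ] at this
    exact (this.trans (hx (n + 1))).mono
      (Submodule.smul_mono_left (Ideal.pow_le_pow_right n.le_succ))
  refine ⟨x, hfix, fun y hy => IsHausdorff.eq_iff_smodEq (I := I).2 fun n => ?_⟩
  induction n with
  | zero => simp
  | succ n ih => simpa only [hy, hfix] using hΦ n _ _ ih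

open Polynomial in
theorem eval_sub_eval_mem_pow_succ {g : R[X]} (hg : ∀ k, g.coeff k ∈ I) {n : ℕ} {x y : R}
    (h : x - y ∈ I ^ n) : g.eval x - g.eval y ∈ I ^ (n + 1) := by
  rw [eval_eq_sum_range, eval_eq_sum_range, ← Finset.sum_sub_distrib]
  refine Ideal.sum_mem _ fun k _ => ?_
  rw [← mul_sub, pow_succ']
  exact Ideal.mul_mem_mul (hg k) (Ideal.mem_of_dvd _ (sub_dvd_pow_sub_pow x y k) h)

open Polynomial in
theorem existsUnique_isRoot_of_map_mk_eq_X [IsAdicComplete I R] {f : R[X]}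
    (hf : f.map (Ideal.Quotient.mk I) = X) : ∃! x, f.IsRoot x := by
  have hcoeff : ∀ k, (X - f).coeff k ∈ I := fun k => by
    rw [← Ideal.Quotient.eq_zero_iff_mem, ← coeff_map, Polynomial.map_sub, hf, map_X, sub_self,
      coeff_zero]
  have hfix := existsUnique_fixedPoint_of_adic_contraction (I := I) (Φ := (X - f).eval)
    fun n x y h => by
      simp only [SModEq.sub_mem, smul_eq_mul, Ideal.mul_top] at h ⊢
      exact eval_sub_eval_mem_pow_succ hcoeff h
  simpa only [eval_sub, eval_X, sub_eq_self, IsRoot.def] using hfix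

open Polynomial in
theorem exists_pow_eq_of_isUnit_natCast [HenselianRing R I] {n : ℕ} (hn : IsUnit (n : R)) {u : R}
    (hu : u - 1 ∈ I) : ∃ g, g ^ n = u := by
  cases subsingleton_or_nontrivial R
  · exact ⟨0, Subsingleton.elim _ _⟩
  have hn0 : n ≠ 0 := by
    rintro rfl
    simp at hn
  obtain ⟨g, hg, -⟩ := HenselianRing.is_henselian (I := I) (X ^ n - C u)
    (monic_X_pow_sub_C u hn0) 1 (by simpa using I.neg_mem hu)
    (by simpa [derivative_X_pow] using hn.map (Ideal.Quotient.mk I))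
  exact ⟨g, by simpa [sub_eq_zero] using hg⟩

/-- `σ` acts trivially on the associated graded ring `⨁ I ^ n / I ^ (n + 1)`: for `I` the maximal
ideal of a discrete valuation ring, the notion of wild automorphism. -/
def IsGradedTrivial (I : Ideal R) (σ : RingAut R) : Prop :=
  ∀ n, ∀ x ∈ I ^ n, σ x - x ∈ I ^ (n + 1)

theorem isGradedTrivial_of_map_sub_self_mem {σ : RingAut R} (h₀ : ∀ x, σ x - x ∈ I)
    (h₁ : ∀ x ∈ I, σ x - x ∈ I ^ 2) : IsGradedTrivial I σ := by
  intro n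
  induction n with
  | zero => simpa using h₀
  | succ n ih =>
    intro x hx
    rw [pow_succ'] at hx
    induction hx using Submodule.mul_induction_on' with
    | mem_mul_mem a ha b hb =>
      have hσa : σ a ∈ I := sub_add_cancel (σ a) a ▸ I.add_mem (h₀ a) ha
      have hσb : σ a * (σ b - b) ∈ I ^ (n + 2) :=
        pow_succ' I (n + 1) ▸ Ideal.mul_mem_mul hσa (ih b hb)
      have hab : (σ a - a) * b ∈ I ^ (n + 2) :=
        add_comm 2 n ▸ pow_add I 2 n ▸ Ideal.mul_mem_mul (h₁ a ha) hb
      convert Ideal.add_mem _ hσb hab using 1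
      rw [map_mul]
      ring
    | add a _ b _ ha hb =>
      convert Ideal.add_mem _ ha hb using 1
      rw [map_add]
      ring

namespace IsGradedTrivial

variable {σ : RingAut R}

theorem mul {τ : RingAut R} (hσ : IsGradedTrivial I σ) (hτ : IsGradedTrivial I τ) :
    IsGradedTrivial I (σ * τ) := by
  intro n x hx
  have hτx : τ x ∈ I ^ n :=
    sub_add_cancel (τ x) x ▸ Ideal.add_mem _ (Ideal.pow_le_pow_right n.le_succ (hτ n x hx)) hx
  simpa using Ideal.add_mem _ (hσ n _ hτx) (hτ n x hx)

theorem pow (hσ : IsGradedTrivial I σ) (j : ℕ) : IsGradedTrivial I (σ ^ j) := by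
  induction j with
  | zero => simp [IsGradedTrivial]
  | succ j ih => exact pow_succ σ j ▸ ih.mul hσ

/- Put `d = σ x - x`. The sum of the `σ ^ j d` telescopes to `0`, but modulo the next power of `I`
it is `m * d`; hence `d` lies in every power of `I`. -/
theorem eq_one_of_pow_eq_one [IsHausdorff I R] (hσ : IsGradedTrivial I σ) {m : ℕ}
    (hm : IsUnit (m : R)) (hpow : σ ^ m = 1) : σ = 1 := by
  ext x
  set d := σ x - x with hd
  have sum_eq_zero : ∑ j ∈ Finset.range m, (σ ^ j) d = 0 := by
    simp only [hd, map_sub, ← RingAut.mul_apply, ← pow_succ]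
    rw [Finset.sum_range_sub (fun j => (σ ^ j) x), hpow, pow_zero, sub_self]
  have mem_pow (n : ℕ) : d ∈ I ^ n := by
    induction n with
    | zero => simp
    | succ n ih =>
      have hsum : ∑ j ∈ Finset.range m, ((σ ^ j) d - d) ∈ I ^ (n + 1) :=
        Ideal.sum_mem _ fun j _ => hσ.pow j n d ih
      rw [Finset.sum_sub_distrib, sum_eq_zero, zero_sub, Finset.sum_const, Finset.card_range,
        nsmul_eq_mul, neg_mem_iff] at hsum
      exact (Ideal.unit_mul_mem_iff_mem _ hm).1 hsum
  exact sub_eq_zero.1 (IsHausdorff.haus ‹_› d fun n => by simpa [SModEq.zero] using mem_pow n)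

end IsGradedTrivial

end Adic

open PowerSeries
open scoped LaurentSeries

section LaurentSeries

theorem ringEquivOfRingEquivHom_surjective {A K : Type*} [CommRing A] [Field K] [Algebra A K]
    [IsFractionRing A K]
    (h : ∀ (σ : RingAut K) (a : A), σ (algebraMap A K a) ∈ (algebraMap A K).range) :
    Function.Surjective (IsFractionRing.ringEquivOfRingEquivHom A K) := by
  intro σ
  choose r hr using h
  have hinj := IsFractionRing.injective A K
  let e : A ≃+* A :=
    { toFun := r σ
      invFun := r σ⁻¹
      left_inv := fun a => hinj (by rw [hr, hr]; exact σ.symm_apply_apply _)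
      right_inv := fun a => hinj (by rw [hr, hr]; exact σ.apply_symm_apply _)
      map_mul' := fun a b => hinj (by simp only [hr, map_mul])
      map_add' := fun a b => hinj (by simp only [hr, map_add]) }
  refine ⟨e, RingEquiv.toRingHom_injective (IsLocalization.ringHom_ext (nonZeroDivisors A) ?_)⟩
  ext a
  simpa [e] using hr σ a

variable {F : Type*} [Field F]

theorem mem_range_algebraMap_of_order_nonneg {x : F⸨X⸩} (hx : 0 ≤ x.order) :
    x ∈ (algebraMap F⟦X⟧ F⸨X⸩).range := by
  lift x.order to ℕ using hx with n hn
  exact ⟨_, LaurentSeries.X_order_mul_powerSeriesPart hn⟩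

theorem mem_range_algebraMap_of_forall_exists_pow_eq {x : F⸨X⸩}
    (h : ∀ n : ℕ, (n : F) ≠ 0 → ∃ y, y ^ n = x) : x ∈ (algebraMap F⟦X⟧ F⸨X⸩).range := by
  obtain ⟨n, hlt, hn⟩ : ∃ n : ℕ, x.order.natAbs < n ∧ (n : F) ≠ 0 := by
    by_contra! hzero
    have h₁ := hzero (x.order.natAbs + 1) (by omega)
    have h₂ := hzero (x.order.natAbs + 2) (by omega)
    push_cast at h₁ h₂
    exact one_ne_zero (α := F) (by linear_combination h₂ - h₁)
  obtain ⟨y, rfl⟩ := h n hn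
  rw [HahnSeries.order_pow] at hlt
  have hdvd : (n : ℤ) ∣ n • y.order := ⟨_, nsmul_eq_mul _ _⟩
  refine mem_range_algebraMap_of_order_nonneg ?_
  rw [HahnSeries.order_pow, Int.eq_zero_of_dvd_of_natAbs_lt_natAbs hdvd (by simpa using hlt)]

theorem map_one_add_X_mul_mem_range (σ : RingAut F⸨X⸩) (f : F⟦X⟧) :
    σ (algebraMap F⟦X⟧ F⸨X⸩ (1 + X * f)) ∈ (algebraMap F⟦X⟧ F⸨X⸩).range := by
  refine mem_range_algebraMap_of_forall_exists_pow_eq fun n hn => ?_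
  have hn' : IsUnit (n : F⟦X⟧) := by
    simpa [PowerSeries.isUnit_iff_constantCoeff] using hn
  obtain ⟨g, hg⟩ := exists_pow_eq_of_isUnit_natCast (I := Ideal.span {X}) (u := 1 + X * f) hn'
    (Ideal.mem_span_singleton.2 ⟨f, by ring⟩)
  exact ⟨σ (algebraMap _ _ g), by rw [← map_pow, ← map_pow, hg]⟩

theorem map_C_mem_range [Algebra.IsIntegral ℤ F] (σ : RingAut F⸨X⸩) (c : F) :
    σ (algebraMap F⟦X⟧ F⸨X⸩ (C c)) ∈ (algebraMap F⟦X⟧ F⸨X⸩).range := by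
  let φ := ((σ : F⸨X⸩ →+* F⸨X⸩).comp (algebraMap F⟦X⟧ F⸨X⸩)).comp C
  obtain ⟨P, hP, hc⟩ := Algebra.IsIntegral.isIntegral (R := ℤ) c
  refine IsIntegrallyClosed.isIntegral_iff.1 ⟨P.map (Int.castRingHom F⟦X⟧), hP.map _, ?_⟩
  rw [Polynomial.eval₂_map, RingHom.ext_int (RingHom.comp _ _) (φ.comp (algebraMap ℤ F))]
  exact (Polynomial.hom_eval₂ P _ φ c).symm.trans (by rw [hc, map_zero])

/-- Automorphisms of `F⸨X⸩` are automatically valuation preserving, hence restrict to `F⟦X⟧`. -/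
noncomputable def ringAutLaurentSeriesEquiv (F : Type*) [Field F] [Algebra.IsIntegral ℤ F] :
    RingAut F⟦X⟧ ≃* RingAut F⸨X⸩ :=
  MulEquiv.ofBijective (IsFractionRing.ringEquivOfRingEquivHom F⟦X⟧ F⸨X⸩)
    ⟨IsFractionRing.ringEquivOfRingEquivHom_injective _ _,
      ringEquivOfRingEquivHom_surjective fun σ f => by
        obtain ⟨g, c, rfl⟩ : ∃ g c, f = (1 + X * g) - 1 + C c :=
          ⟨_, _, by rw [add_sub_cancel_left]; exact eq_X_mul_shift_add_const f⟩
        rw [map_add, map_sub, map_add, map_sub, map_one, map_one]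
        exact add_mem (sub_mem (map_one_add_X_mul_mem_range σ _) (one_mem _))
          (map_C_mem_range σ _)⟩

end LaurentSeries

section LeadingTerm

variable {F : Type*} [Field F]

theorem X_dvd_map (σ : RingAut F⟦X⟧) {f : F⟦X⟧} (hf : X ∣ f) : X ∣ σ f := by
  have isUnit_iff (g : F⟦X⟧) : ¬ X ∣ g ↔ IsUnit g := by
    rw [X_dvd_iff, PowerSeries.isUnit_iff_constantCoeff, isUnit_iff_ne_zero]
  contrapose! hf
  rw [isUnit_iff] at hf ⊢
  simpa using hf

theorem constantCoeff_map_eq (σ : RingAut F⟦X⟧) {f g : F⟦X⟧}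
    (h : constantCoeff f = constantCoeff g) : constantCoeff (σ f) = constantCoeff (σ g) := by
  have hdvd : X ∣ f - g := X_dvd_iff.2 (by rw [map_sub, h, sub_self])
  simpa [X_dvd_iff, sub_eq_zero] using X_dvd_map σ hdvd

/-- The automorphism of the residue field `F` induced by an automorphism of `F⟦X⟧`. -/
noncomputable def residueAut : RingAut F⟦X⟧ →* RingAut F :=
  toRingAut
    { toFun := fun σ => constantCoeff.comp ((σ : F⟦X⟧ →+* F⟦X⟧).comp C)
      map_one' := by ext c; simp
      map_mul' := fun σ τ => RingHom.ext fun c => constantCoeff_map_eq σ (by simp) }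

theorem residueAut_constantCoeff (σ : RingAut F⟦X⟧) (f : F⟦X⟧) :
    residueAut σ (constantCoeff f) = constantCoeff (σ f) :=
  constantCoeff_map_eq σ (by simp)

theorem coeff_one_map (σ : RingAut F⟦X⟧) {f : F⟦X⟧} (hf : X ∣ f) :
    coeff 1 (σ f) = coeff 1 (σ X) * residueAut σ (coeff 1 f) := by
  have coeff_one_X_mul (g : F⟦X⟧) : coeff 1 (X * g) = constantCoeff g := by simp
  obtain ⟨g, rfl⟩ := hf
  obtain ⟨h, hh⟩ := X_dvd_map σ dvd_rfl
  rw [map_mul, hh, mul_assoc, coeff_one_X_mul, coeff_one_X_mul, coeff_one_X_mul, map_mul,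
    residueAut_constantCoeff]

theorem coeff_one_map_X_ne_zero (σ : RingAut F⟦X⟧) : coeff 1 (σ X) ≠ 0 := by
  intro h
  have := coeff_one_map σ (X_dvd_map σ⁻¹ dvd_rfl)
  rw [h, zero_mul, ← RingAut.mul_apply, mul_inv_cancel, RingAut.one_apply, coeff_one_X] at this
  exact one_ne_zero this

/-- The action of field automorphisms on the multiplicative group. -/
def unitsAut (F : Type*) [Field F] : RingAut F →* MulAut Fˣ where
  toFun σ := Units.mapEquiv (σ : F ≃* F)
  map_one' := by ext; rfl
  map_mul' _ _ := by ext; rfl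

/-- The one-dimensional semilinear group `ΓL₁(F)`: the pair `(c, σ)` stands for `x ↦ c * σ x`. -/
abbrev GammaL1 (F : Type*) [Field F] := Fˣ ⋊[unitsAut F] RingAut F

/-- The leading term of an automorphism of `F⟦X⟧`, that is its action on the associated graded ring
`F[X]`, which is `X ↦ c * X` twisted by an automorphism of `F`. -/
noncomputable def leadingTerm : RingAut F⟦X⟧ →* GammaL1 F where
  toFun σ := ⟨Units.mk0 (coeff 1 (σ X)) (coeff_one_map_X_ne_zero σ), residueAut σ⟩
  map_one' := by ext <;> simp
  map_mul' σ τ := by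
    ext
    · exact coeff_one_map σ (X_dvd_map τ dvd_rfl)
    · simp

theorem isGradedTrivial_of_leadingTerm_eq_one {σ : RingAut F⟦X⟧} (h : leadingTerm σ = 1) :
    IsGradedTrivial (Ideal.span {X}) σ := by
  have hX : coeff 1 (σ X) = 1 := congrArg (fun g : GammaL1 F => (g.left : F)) h
  have hres : residueAut σ = 1 := congrArg SemidirectProduct.right h
  refine isGradedTrivial_of_map_sub_self_mem (fun f => ?_) fun f hf => ?_
  · rw [Ideal.mem_span_singleton, X_dvd_iff, map_sub, ← residueAut_constantCoeff, hres,
      RingAut.one_apply, sub_self]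
  · rw [Ideal.mem_span_singleton] at hf
    rw [Ideal.span_singleton_pow, Ideal.mem_span_singleton, X_pow_dvd_iff]
    intro m hm
    interval_cases m
    · simp [X_dvd_iff.1 hf, X_dvd_iff.1 (X_dvd_map σ hf)]
    · rw [map_sub, coeff_one_map σ hf, hX, hres, RingAut.one_apply, one_mul, sub_self]

theorem leadingTerm_comp_subtype_injective {H : Subgroup (RingAut F⟦X⟧)}
    (hH : (Nat.card H : F) ≠ 0) : Function.Injective (leadingTerm.comp H.subtype) := by
  have hunit : IsUnit (Nat.card H : F⟦X⟧) := by
    simpa [PowerSeries.isUnit_iff_constantCoeff] using hH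
  refine (injective_iff_map_eq_one _).2 fun σ hσ => Subtype.ext ?_
  exact (isGradedTrivial_of_leadingTerm_eq_one hσ).eq_one_of_pow_eq_one hunit
    (congrArg Subtype.val (pow_card_eq_one' (x := σ)))

/-- The automorphisms of `F⟦X⟧` defined by `ΓL₁(F)`, acting semilinearly on `X`. -/
noncomputable def semilinearAut : GammaL1 F →* RingAut F⟦X⟧ :=
  toRingAut
    { toFun := fun g => (rescale (g.left : F)).comp (PowerSeries.map (g.right : F →+* F))
      map_one' := by ext; simp
      map_mul' := fun g h => by
        ext f n
        simp [coeff_rescale, unitsAut, mul_pow, mul_assoc] }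

theorem leadingTerm_semilinearAut (g : GammaL1 F) : leadingTerm (semilinearAut g) = g := by
  ext c
  · simp [leadingTerm, semilinearAut]
  · simp [leadingTerm, semilinearAut, residueAut, ← coeff_zero_eq_constantCoeff_apply,
      coeff_rescale]

end LeadingTerm

section Translation

variable {F : Type*} [Field F]

theorem transcendental_of_constantCoeff_eq_zero {f : F⟦X⟧} (hf : f ≠ 0)
    (hf₀ : constantCoeff f = 0) : Transcendental F f := by
  intro halg
  have := PowerSeries.isUnit_iff_constantCoeff.1 (halg.isIntegral.isUnit hf)
  simp [hf₀] at this

variable (V : AddSubgroup (Polynomial F)) [Fintype V]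

/-- The polynomial over `F⟦X⟧` expressing, with denominators cleared, the equation
`x⁻¹ = ∏ v ∈ V, (t⁻¹ - v(x))`, whose right-hand side is formally invariant under the translations of
`t⁻¹` by the `v(x)`. -/
noncomputable def invariantPoly (t : F⟦X⟧) : Polynomial F⟦X⟧ :=
  Polynomial.X * ∏ v : V, (1 - Polynomial.C t * (v : Polynomial F).map C) -
    Polynomial.C (t ^ Fintype.card V)

variable {V} in
theorem isRoot_invariantPoly_iff {t x : F⟦X⟧} : (invariantPoly V t).IsRoot x ↔
    x * ∏ v : V, (1 - t * Polynomial.aeval x (v : Polynomial F)) = t ^ Fintype.card V := by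
  simp [invariantPoly, sub_eq_zero, Polynomial.eval_prod, Polynomial.eval_map, Polynomial.aeval_def,
    algebraMap_eq]

theorem existsUnique_isRoot_invariantPoly {t : F⟦X⟧} (ht : X ∣ t) :
    ∃! x, (invariantPoly V t).IsRoot x := by
  have ht' : Ideal.Quotient.mk (Ideal.span {X}) t = 0 :=
    Ideal.Quotient.eq_zero_iff_mem.2 (Ideal.mem_span_singleton.2 ht)
  refine existsUnique_isRoot_of_map_mk_eq_X (I := Ideal.span {X}) ?_
  simp [invariantPoly, Polynomial.map_prod, ht']

/-- The series `x` with `x⁻¹ = ∏ v ∈ V, (X⁻¹ - v(x))`. -/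
noncomputable def invariant : F⟦X⟧ :=
  (existsUnique_isRoot_invariantPoly V dvd_rfl).choose

theorem isRoot_invariant : (invariantPoly V X).IsRoot (invariant V) :=
  (existsUnique_isRoot_invariantPoly V dvd_rfl).choose_spec.1

theorem transcendental_invariant : Transcendental F (invariant V) := by
  have heq := isRoot_invariantPoly_iff.1 (isRoot_invariant V)
  refine transcendental_of_constantCoeff_eq_zero (fun h₀ => ?_) ?_
  · rw [h₀, zero_mul] at heq
    exact pow_ne_zero _ X_ne_zero heq.symm
  · simpa using congrArg constantCoeff heq

variable {V}

/-- The inverse of `X⁻¹ + v(x)`, for `x` the invariant. -/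
noncomputable def translateX (v : V) : F⟦X⟧ :=
  X * (1 + X * Polynomial.aeval (invariant V) (v : Polynomial F))⁻¹

theorem translateX_mul (v : V) :
    translateX v * (1 + X * Polynomial.aeval (invariant V) (v : Polynomial F)) = X := by
  rw [translateX, mul_assoc, PowerSeries.inv_mul_cancel _ (by simp), mul_one]

theorem one_add_X_mul_ne_zero (f : F⟦X⟧) : 1 + X * f ≠ 0 := fun h => by
  simpa using congrArg constantCoeff h

theorem X_dvd_translateX (v : V) : X ∣ translateX v := dvd_mul_right _ _

theorem translateX_zero : translateX (0 : V) = X := by simpa using translateX_mul (0 : V)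

theorem translateX_injective : Function.Injective (translateX (V := V)) := by
  intro v w h
  have hmul := (translateX_mul v).trans (translateX_mul w).symm
  have hne : translateX w ≠ 0 := left_ne_zero_of_mul ((translateX_mul w).trans_ne X_ne_zero)
  rw [h] at hmul
  have heval := mul_left_cancel₀ X_ne_zero (add_left_cancel (mul_left_cancel₀ hne hmul))
  exact Subtype.ext (transcendental_iff_injective.1 (transcendental_invariant V) heval)

theorem isRoot_invariantPoly_translateX (v : V) :
    (invariantPoly V (translateX v)).IsRoot (invariant V) := by
  set x := invariant V
  set u := 1 + X * Polynomial.aeval x (v : Polynomial F) with hu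
  have hT : translateX v * u = X := translateX_mul v
  rw [isRoot_invariantPoly_iff]
  apply mul_right_cancel₀ (pow_ne_zero (Fintype.card V) (one_add_X_mul_ne_zero _ : u ≠ 0))
  calc x * (∏ w : V, (1 - translateX v * Polynomial.aeval x (w : Polynomial F))) *
        u ^ Fintype.card V
      = x * ∏ w : V, (1 - translateX v * Polynomial.aeval x (w : Polynomial F)) * u := by
        rw [Finset.prod_mul_distrib, Finset.prod_const, Finset.card_univ, mul_assoc]
    _ = x * ∏ w : V, (1 - X * Polynomial.aeval x ((w - v : V) : Polynomial F)) := by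
        congr! 2 with w
        rw [AddSubgroup.coe_sub, map_sub]
        linear_combination hu - Polynomial.aeval x (w : Polynomial F) * hT
    _ = x * ∏ w : V, (1 - X * Polynomial.aeval x (w : Polynomial F)) := by
        exact congrArg (x * ·) ((Equiv.subRight v).prod_comp fun w : V =>
          1 - X * Polynomial.aeval x (w : Polynomial F))
    _ = X ^ Fintype.card V := isRoot_invariantPoly_iff.1 (isRoot_invariant V)
    _ = translateX v ^ Fintype.card V * u ^ Fintype.card V := by rw [← mul_pow, hT]

theorem hasSubst_translateX (v : V) : HasSubst (translateX v) :=
  HasSubst.of_constantCoeff_zero' (X_dvd_iff.1 (X_dvd_translateX v))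

/-- The substitution `X ↦ (X⁻¹ + v(x))⁻¹`. -/
noncomputable def translate (v : V) : F⟦X⟧ →ₐ[F] F⟦X⟧ := substAlgHom (hasSubst_translateX v)

theorem translate_apply (v : V) (f : F⟦X⟧) : translate v f = f.subst (translateX v) := by
  rw [translate, coe_substAlgHom]

theorem translate_X (v : V) : translate v X = translateX v := substAlgHom_X _

theorem translate_invariant (v : V) : translate v (invariant V) = invariant V := by
  refine (existsUnique_isRoot_invariantPoly V (X_dvd_translateX v)).unique ?_
    (isRoot_invariantPoly_translateX v)
  have := congrArg (translate v) (isRoot_invariantPoly_iff.1 (isRoot_invariant V))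
  rw [isRoot_invariantPoly_iff]
  simpa only [map_mul, map_prod, map_pow, map_sub, map_one, translate_X,
    ← Polynomial.aeval_algHom_apply] using this

theorem translate_translateX (v w : V) : translate v (translateX w) = translateX (v + w) := by
  have hv := translateX_mul v
  have hw := congrArg (translate v) (translateX_mul w)
  simp only [map_mul, map_add, map_one, translate_X, ← Polynomial.aeval_algHom_apply,
    translate_invariant] at hw
  apply mul_right_cancel₀ (one_add_X_mul_ne_zero (Polynomial.aeval (invariant V) (v + w).1))
  rw [translateX_mul, AddSubgroup.coe_add, map_add]
  set a := Polynomial.aeval (invariant V) (v : Polynomial F)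
  set b := Polynomial.aeval (invariant V) (w : Polynomial F)
  linear_combination (1 + X * a) * hw + (1 - translate v (translateX w) * b) * hv

variable (V) in
/-- The action of `V` on `F⟦X⟧` by the substitutions `X⁻¹ ↦ X⁻¹ + v(x)`. -/
noncomputable def translateAut : Multiplicative V →* RingAut F⟦X⟧ :=
  toRingAut
    { toFun := fun v => translate v.toAdd
      map_one' := RingHom.ext fun f => by
        simp [translate_apply, translateX_zero, X_subst]
      map_mul' := fun v w => RingHom.ext fun f => by
        have := subst_comp_subst_apply (hasSubst_translateX w.toAdd)
          (hasSubst_translateX v.toAdd) f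
        simp [translate_apply, ← translate_translateX, this] }

theorem translateAut_injective : Function.Injective (translateAut V) := by
  intro v w h
  have hX : translate v.toAdd X = translate w.toAdd X := RingEquiv.congr_fun h X
  rw [translate_X, translate_X] at hX
  exact Multiplicative.toAdd.injective (translateX_injective hX)

end Translation

section Cardinality

theorem exists_addSubgroup_polynomial_card_eq (F : Type*) [Field F] (p : ℕ) [Fact p.Prime]
    [Algebra (ZMod p) F] (a : ℕ) : ∃ V : AddSubgroup (Polynomial F), Nat.card V = p ^ a := by
  let f : Polynomial (ZMod p) →+ Polynomial F :=
    (Polynomial.mapRingHom (algebraMap (ZMod p) F)).toAddMonoidHom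
  refine ⟨(Polynomial.degreeLT (ZMod p) a).toAddSubgroup.map f, ?_⟩
  rw [AddSubgroup.card_map_of_injective
    (Polynomial.map_injective _ (algebraMap (ZMod p) F).injective)]
  exact (Nat.card_congr (Polynomial.degreeLTEquiv (ZMod p) a).toEquiv).trans (by simp)

theorem card_ringAut_eq_card_algEquiv (R : Type*) [CommRing R] (p : ℕ) [Algebra (ZMod p) R] :
    Nat.card (RingAut R) = Nat.card (R ≃ₐ[ZMod p] R) :=
  Nat.card_congr
    { toFun := fun σ => AlgEquiv.ofRingEquiv (f := σ) fun c => RingHom.congr_fun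
        (Subsingleton.elim ((σ : R →+* R).comp (algebraMap (ZMod p) R)) (algebraMap (ZMod p) R)) c
      invFun := fun σ => σ.toRingEquiv
      left_inv := fun _ => rfl
      right_inv := fun _ => rfl }

instance {F : Type*} [Field F] [Finite F] : Finite (GammaL1 F) :=
  have : Finite (RingAut F) := DFunLike.finite (F ≃+* F)
  Finite.of_equiv _ SemidirectProduct.equivProd.symm

theorem card_gammaL1_galoisField (p : ℕ) [Fact p.Prime] {i : ℕ} (hi : i ≠ 0) :
    Nat.card (GammaL1 (GaloisField p i)) = i * (p ^ i - 1) := by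
  rw [SemidirectProduct.card, Nat.card_units, GaloisField.card p i hi,
    card_ringAut_eq_card_algEquiv _ p, IsGalois.card_aut_eq_finrank, GaloisField.finrank p hi,
    mul_comm]

end Cardinality

end LaurentGalois

open LaurentGalois in
theorem galois_subfield_degree_laurent_general (p : ℕ) [Fact p.Prime] {F : Type*} [Field F]
    [Algebra (ZMod p) F] [Algebra.IsAlgebraic (ZMod p) F] {q : ℕ} (hq : q.Prime) (a : ℕ) :
    (∃ K' : Subfield (LaurentSeries F), FiniteDimensional K' (LaurentSeries F) ∧
      IsGalois K' (LaurentSeries F) ∧ q ^ a ∣ Module.finrank K' (LaurentSeries F)) ↔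
      q = p ∨ ∃ H : Subgroup (GammaL1 F), Nat.card H = q ^ a := by
  have : CharP F p := charP_of_injective_algebraMap (algebraMap (ZMod p) F).injective p
  have : Algebra.IsIntegral ℤ F := Algebra.IsIntegral.trans (ZMod p)
  rw [exists_isGalois_subfield_iff_exists_subgroup hq,
    ← exists_subgroup_card_eq_iff_of_mulEquiv (ringAutLaurentSeriesEquiv F)]
  constructor
  · rintro ⟨H, hH⟩
    refine or_iff_not_imp_left.2 fun hqp => ?_
    have card_ne_zero : (Nat.card H : F) ≠ 0 := by
      rw [hH, Ne, CharP.cast_eq_zero_iff F p]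
      exact fun h => hqp ((Nat.prime_dvd_prime_iff_eq Fact.out hq).1
        (Nat.Prime.dvd_of_dvd_pow Fact.out h)).symm
    exact exists_subgroup_card_eq_of_injective (leadingTerm_comp_subtype_injective card_ne_zero)
      ⟨⊤, Subgroup.card_top.trans hH⟩
  · rintro (rfl | tame)
    · obtain ⟨V, hV⟩ := exists_addSubgroup_polynomial_card_eq F q a
      have : Finite V := Nat.finite_of_card_ne_zero (hV ▸ pow_ne_zero a hq.ne_zero)
      cases nonempty_fintype V
      exact exists_subgroup_card_eq_of_injective translateAut_injective
        ⟨⊤, Subgroup.card_top.trans hV⟩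
    · exact exists_subgroup_card_eq_of_injective
        (Function.LeftInverse.injective leadingTerm_semilinearAut) tame

/-- Let `K = 𝔽_{p^i}((T))`, let `q` be a prime and `a ∈ ℕ`. There exists a
subfield `K' ≤ K` such that `K/K'` is a finite Galois extension with `q^a` dividing `[K:K']`
if and only if `q = p` or `q^a` divides `i(p^i − 1)`. -/
theorem galois_subfield_degree_laurent (p : ℕ) [Fact p.Prime] (i : ℕ) (hi : 0 < i)
    (q : ℕ) (hq : q.Prime) (a : ℕ) :
    (∃ K' : Subfield (LaurentSeries (GaloisField p i)),
        FiniteDimensional ↥K' (LaurentSeries (GaloisField p i)) ∧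
        IsGalois ↥K' (LaurentSeries (GaloisField p i)) ∧
        q ^ a ∣ Module.finrank ↥K' (LaurentSeries (GaloisField p i)))
      ↔ (q = p ∨ q ^ a ∣ i * (p ^ i - 1)) := by
  rw [galois_subfield_degree_laurent_general p hq a,
    LaurentGalois.exists_subgroup_card_eq_prime_pow_iff hq,
    LaurentGalois.card_gammaL1_galoisField p hi.ne']
end

section
/- Let K = F_{p^i}((T)), D a central division algebra of degree d over K, n ≥ 1. If gcd(nd, [K:K']) divides n for every subfield K' ≤ K with K/K' finite Galois, then gcd(d, p) = 1 and gcd(nd, i(p^i − 1)) divides n. Conversely these two conditions imply the divisibility condition for all such K'. -/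
/-!
Write `F = 𝔽_{p^i}` and `K = F((T))`.

Any finite group `G` of ring automorphisms of `F⟦T⟧` yields a Galois extension `K / K^G` of degree
`|G|`. Two families of such groups are enough. The group `Fˣ ⋊ Aut F`, with `Fˣ` rescaling `T`, has
order `i (p^i - 1)`. To get a group of order `|F|^s`, let `V` be the space of polynomials of degree
less than `s` and let `x ∈ T F⟦T⟧` solve `x + x^(N + 2) = ∏_{v ∈ V} (T - x² v(x))` for a large `N`,
by Hensel's lemma. Any substitution `T ↦ T + x² w(x)` with `w ∈ V` permutes the factors on the
right, hence fixes `x`, so these substitutions compose like the elements of `V`. If `gcd(nd, |F|^s)`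
divides `n` for all `s`, then so does `gcd(d, |F|)^s`, which forces `gcd(d, p) = 1`.

In the other direction, a 1-unit of `F⟦T⟧` is an `N`-th power for every `N` prime to `p`, while an
element of `K` outside `F⟦T⟧` is an `N`-th power for only finitely many `N`. So every automorphism
of `K` preserves `F⟦T⟧`, and a finite group `G = Gal(K/K')` acts on `F⟦T⟧` and has its ramification
filtration: `G` modulo inertia embeds into `Aut F`, inertia modulo wild inertia embeds into `Fˣ`,
and wild inertia is a `p`-group. Hence `[K : K']` divides `i (p^i - 1) p^a` for some `a`, and the
factor `p^a` is irrelevant if `d` is prime to `p`.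
-/

open Polynomial IsLocalRing

theorem exists_isGalois_subfield_finrank_eq_card {A G : Type*} (K : Type*) [CommRing A]
    [Field K] [Algebra A K] [IsFractionRing A K] [Group G] [Finite G]
    {ρ : G →* (A →+* A)} (hρ : Function.Injective ρ) :
    ∃ K' : Subfield K, FiniteDimensional K' K ∧ IsGalois K' K ∧
      Module.finrank K' K = Nat.card G := by
  let := MulSemiringAction.compHom A ρ
  let := IsFractionRing.mulSemiringAction G A K
  have : FaithfulSMul G A := ⟨fun h ↦ hρ (RingHom.ext h)⟩
  have : FaithfulSMul G K := IsFractionRing.faithfulSMul G A K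
  exact ⟨FixedPoints.subfield G K, IsGaloisGroup.finiteDimensional G _ K,
    IsGaloisGroup.isGalois G _ K, (IsGaloisGroup.card_eq_finrank G _ K).symm⟩

section OrbitPolynomial

variable {F R S : Type*} [CommRing F] [CommRing R] [CommRing S] [Algebra F R] [Algebra F S]
  (V : AddSubgroup F[X]) [Fintype V]

/-- The polynomial `Z ^ (N + 2) + Z - ∏ v ∈ V, (t - Z ^ 2 * v(Z))`. A root `x` remains a root when
`t` is translated by `x ^ 2 * w(x)` with `w ∈ V`. The leading term, with `N` a bound for the degree
of the product, is only there to make the polynomial monic. -/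
noncomputable def orbitPolynomial (t : R) : R[X] :=
  X ^ (∑ v : V, (v.1.natDegree + 2) + 2) + (X - ∏ v : V, (C t - X ^ 2 * v.1.map (algebraMap F R)))

theorem orbitPolynomial_monic (t : R) : (orbitPolynomial V t).Monic := by
  refine monic_X_pow_add (degree_lt_iff_coeff_zero .. |>.mpr fun m hm ↦ ?_)
  have hfactor (v : F[X]) :
      (C t - X ^ 2 * v.map (algebraMap F R)).natDegree ≤ v.natDegree + 2 := by
    have := natDegree_map_le (f := algebraMap F R) (p := v)
    compute_degree
    lia
  have hprod : (∏ v : V, (C t - X ^ 2 * v.1.map (algebraMap F R))).natDegree ≤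
      ∑ v : V, (v.1.natDegree + 2) :=
    (natDegree_prod_le _ _).trans (Finset.sum_le_sum fun v _ ↦ hfactor v)
  rw [coeff_sub, coeff_X_of_ne_one (by lia), coeff_eq_zero_of_natDegree_lt (by lia), sub_zero]

theorem eval_orbitPolynomial (t x : R) : (orbitPolynomial V t).eval x =
    x ^ (∑ v : V, (v.1.natDegree + 2) + 2) + (x - ∏ v : V, (t - x ^ 2 * aeval x v.1)) := by
  simp [orbitPolynomial, eval_prod, aeval_def, eval_map]

theorem eval_zero_derivative_orbitPolynomial (t : R) :
    (derivative (orbitPolynomial V t)).eval 0 = 1 := by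
  have hprod : (derivative (∏ v : V, (C t - X ^ 2 * v.1.map (algebraMap F R)))).eval 0 = 0 :=
    Finset.prod_induction _ (fun q ↦ (derivative q).eval 0 = 0)
      (fun f g hf hg ↦ by simp [hf, hg]) (by simp) (by simp)
  simp [orbitPolynomial, hprod]

theorem isRoot_orbitPolynomial_map (σ : R →ₐ[F] S) {t x : R} (hx : (orbitPolynomial V t).IsRoot x) :
    (orbitPolynomial V (σ t)).IsRoot (σ x) := by
  rw [IsRoot.def, eval_orbitPolynomial] at hx ⊢
  simpa [aeval_algHom_apply] using congr(σ $hx)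

theorem isRoot_orbitPolynomial_translate {w : F[X]} (hw : w ∈ V) {t x : R}
    (hx : (orbitPolynomial V t).IsRoot x) :
    (orbitPolynomial V (t + x ^ 2 * aeval x w)).IsRoot x := by
  rw [IsRoot.def, eval_orbitPolynomial] at hx ⊢
  rw [← hx, ← Equiv.prod_comp (Equiv.addRight ⟨w, hw⟩)]
  congr! 3 with v
  simp only [Equiv.coe_addRight, AddSubgroup.coe_add, map_add]
  ring

theorem isUnit_eval_derivative_orbitPolynomial [IsLocalRing R] (t : R) {x : R}
    (hx : x ∈ maximalIdeal R) : IsUnit ((derivative (orbitPolynomial V t)).eval x) := by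
  have h := sub_dvd_eval_sub x 0 (derivative (orbitPolynomial V t))
  rw [sub_zero, eval_zero_derivative_orbitPolynomial] at h
  by_contra hu
  exact (maximalIdeal R).ne_top_iff_one.mp (maximalIdeal.isMaximal R).ne_top <|
    (Submodule.sub_mem_iff_right _ hu).mp (Ideal.mem_of_dvd _ h hx)

theorem existsUnique_isRoot_orbitPolynomial [HenselianLocalRing R] {t : R}
    (ht : t ∈ maximalIdeal R) :
    ∃! x, x ∈ maximalIdeal R ∧ (orbitPolynomial V t).IsRoot x := by
  have h0 : (orbitPolynomial V t).eval 0 ∈ maximalIdeal R := by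
    simpa [eval_orbitPolynomial] using Ideal.pow_mem_of_mem _ ht (Fintype.card V) Fintype.card_pos
  obtain ⟨x, hx, hx0⟩ := HenselianLocalRing.is_henselian _ (orbitPolynomial_monic V t) 0 h0
    (isUnit_eval_derivative_orbitPolynomial V t (zero_mem _))
  rw [sub_zero] at hx0
  refine ⟨x, ⟨hx0, hx⟩, fun y ⟨hy0, hy⟩ ↦ ?_⟩
  exact eq_of_eval_eq_zero_of_not_isUnit_sub hy hx (sub_mem hy0 hx0 :)
    (isUnit_eval_derivative_orbitPolynomial V t hy0)

end OrbitPolynomial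

instance {F : Type*} [Field F] : HenselianLocalRing (PowerSeries F) where
  is_henselian f hf a ha hu := by
    rw [PowerSeries.maximalIdeal_eq_span_X] at ha ⊢
    exact HenselianRing.is_henselian f hf a ha (hu.map _)

section Translation

open scoped PowerSeries

variable {F : Type*} [Field F] (V : AddSubgroup F[X]) [Fintype V]

theorem mem_maximalIdeal_powerSeries_iff {f : F⟦X⟧} :
    f ∈ maximalIdeal F⟦X⟧ ↔ PowerSeries.constantCoeff f = 0 := by
  rw [← PowerSeries.ker_coeff_eq_max_ideal, RingHom.mem_ker]

theorem X_mem_maximalIdeal_powerSeries : (PowerSeries.X : F⟦X⟧) ∈ maximalIdeal F⟦X⟧ :=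
  mem_maximalIdeal_powerSeries_iff.mpr PowerSeries.constantCoeff_X

/-- The root in the maximal ideal of `orbitPolynomial V X`, which the substitutions
`X ↦ X + x ^ 2 * w(x)`, `w ∈ V`, leave fixed. -/
noncomputable def orbitRoot : F⟦X⟧ :=
  (existsUnique_isRoot_orbitPolynomial V (t := (PowerSeries.X : F⟦X⟧))
    X_mem_maximalIdeal_powerSeries).choose

theorem orbitRoot_mem_maximalIdeal : orbitRoot V ∈ maximalIdeal F⟦X⟧ :=
  (existsUnique_isRoot_orbitPolynomial V X_mem_maximalIdeal_powerSeries).choose_spec.1.1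

theorem isRoot_orbitRoot : (orbitPolynomial V PowerSeries.X).IsRoot (orbitRoot V) :=
  (existsUnique_isRoot_orbitPolynomial V X_mem_maximalIdeal_powerSeries).choose_spec.1.2

theorem orbitRoot_ne_zero : orbitRoot V ≠ 0 := by
  intro h
  simpa [h, IsRoot.def, eval_orbitPolynomial] using isRoot_orbitRoot V

theorem X_add_orbitRoot_sq_mul_mem_maximalIdeal (f : F⟦X⟧) :
    PowerSeries.X + orbitRoot V ^ 2 * f ∈ maximalIdeal F⟦X⟧ :=
  add_mem X_mem_maximalIdeal_powerSeries <|
    Ideal.mul_mem_right _ _ (Ideal.pow_mem_of_mem _ (orbitRoot_mem_maximalIdeal V) 2 two_pos)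

theorem hasSubst_X_add_orbitRoot_sq_mul (f : F⟦X⟧) :
    PowerSeries.HasSubst (PowerSeries.X + orbitRoot V ^ 2 * f) :=
  .of_constantCoeff_zero' <| mem_maximalIdeal_powerSeries_iff.mp <|
    X_add_orbitRoot_sq_mul_mem_maximalIdeal V f

theorem aeval_orbitRoot_injective :
    Function.Injective (aeval (orbitRoot V) : F[X] →ₐ[F] F⟦X⟧) :=
  transcendental_iff_injective.mp fun h ↦ orbitRoot_mem_maximalIdeal V <|
    h.isIntegral.isUnit (orbitRoot_ne_zero V)

/-- The substitution `X ↦ X + x ^ 2 * w(x)` for `x = orbitRoot V`. -/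
noncomputable def orbitTranslation (w : F[X]) : F⟦X⟧ →ₐ[F] F⟦X⟧ :=
  PowerSeries.substAlgHom (hasSubst_X_add_orbitRoot_sq_mul V (aeval (orbitRoot V) w))

theorem orbitTranslation_X (w : F[X]) : orbitTranslation V w PowerSeries.X =
    PowerSeries.X + orbitRoot V ^ 2 * aeval (orbitRoot V) w :=
  PowerSeries.substAlgHom_X _

theorem orbitTranslation_zero : orbitTranslation V 0 = .id F F⟦X⟧ := by
  ext1 f
  simp [orbitTranslation, PowerSeries.coe_substAlgHom, PowerSeries.X_subst]

variable {V}

theorem orbitTranslation_orbitRoot {w : F[X]} (hw : w ∈ V) :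
    orbitTranslation V w (orbitRoot V) = orbitRoot V := by
  refine (existsUnique_isRoot_orbitPolynomial V
      (X_add_orbitRoot_sq_mul_mem_maximalIdeal V (aeval (orbitRoot V) w))).unique
    ⟨?_, orbitTranslation_X V w ▸ isRoot_orbitPolynomial_map V _ (isRoot_orbitRoot V)⟩
    ⟨orbitRoot_mem_maximalIdeal V, isRoot_orbitPolynomial_translate V hw (isRoot_orbitRoot V)⟩
  have hx := orbitRoot_mem_maximalIdeal V
  have hb := X_add_orbitRoot_sq_mul_mem_maximalIdeal V (aeval (orbitRoot V) w)
  rw [mem_maximalIdeal_powerSeries_iff] at hx hb ⊢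
  rw [orbitTranslation, PowerSeries.coe_substAlgHom]
  exact PowerSeries.constantCoeff_subst_eq_zero hb _ hx

theorem orbitTranslation_add {v : F[X]} (hv : v ∈ V) (w : F[X]) :
    orbitTranslation V (v + w) = (orbitTranslation V v).comp (orbitTranslation V w) := by
  have hX : orbitTranslation V v (PowerSeries.X + orbitRoot V ^ 2 * aeval (orbitRoot V) w) =
      PowerSeries.X + orbitRoot V ^ 2 * aeval (orbitRoot V) (v + w) := by
    simp only [map_add, map_mul, map_pow, orbitTranslation_X, orbitTranslation_orbitRoot hv,
      ← aeval_algHom_apply]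
    ring
  ext1 f
  simp only [orbitTranslation, PowerSeries.coe_substAlgHom, AlgHom.comp_apply] at hX ⊢
  rw [← hX, PowerSeries.subst_comp_subst_apply (hasSubst_X_add_orbitRoot_sq_mul V _)
    (hasSubst_X_add_orbitRoot_sq_mul V _)]

variable (V) in
/-- The translations by `V`, as a group acting on `F⟦X⟧`. -/
noncomputable def orbitTranslationHom : Multiplicative V →* (F⟦X⟧ →+* F⟦X⟧) where
  toFun w := orbitTranslation V w.toAdd
  map_one' := by ext1; simp [orbitTranslation_zero]
  map_mul' v w := RingHom.ext fun f ↦ congr($(orbitTranslation_add v.toAdd.2 w.toAdd) f)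

theorem orbitTranslationHom_injective : Function.Injective (orbitTranslationHom V) := by
  intro v w h
  have hX : orbitTranslation V v.toAdd PowerSeries.X = orbitTranslation V w.toAdd PowerSeries.X :=
    congr($h PowerSeries.X)
  rw [orbitTranslation_X, orbitTranslation_X, add_right_inj,
    mul_right_inj' (pow_ne_zero 2 (orbitRoot_ne_zero V))] at hX
  exact Subtype.ext (aeval_orbitRoot_injective V hX)

end Translation

theorem exists_isGalois_subfield_finrank_eq_card_pow (F : Type*) [Field F] [Finite F] (s : ℕ) :
    ∃ K' : Subfield (LaurentSeries F), FiniteDimensional K' (LaurentSeries F) ∧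
      IsGalois K' (LaurentSeries F) ∧ Module.finrank K' (LaurentSeries F) = Nat.card F ^ s := by
  have e := (degreeLTEquiv F s).toEquiv
  have : Finite (degreeLT F s) := Finite.of_equiv _ e.symm
  have : Fintype (degreeLT F s).toAddSubgroup := Fintype.ofFinite (degreeLT F s)
  have hcard : Nat.card (Multiplicative (degreeLT F s).toAddSubgroup) = Nat.card F ^ s :=
    (Nat.card_congr e).trans (by rw [Nat.card_fun, Nat.card_fin])
  exact hcard ▸ exists_isGalois_subfield_finrank_eq_card (LaurentSeries F)
    (orbitTranslationHom_injective (V := (degreeLT F s).toAddSubgroup))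

section Rescaling

open scoped PowerSeries

/-- The action of `RingAut F` on `Fˣ`. -/
def ringAutToMulAutUnits (F : Type*) [Semiring F] : RingAut F →* MulAut Fˣ where
  toFun g := Units.mapEquiv g.toMulEquiv
  map_one' := rfl
  map_mul' _ _ := rfl

/-- The action of `Fˣ ⋊ RingAut F` on `F⟦X⟧` by `(c, g) • f = (g f)(c X)`, with `g` acting on the
coefficients of `f`. -/
noncomputable def rescaleMapHom (F : Type*) [CommSemiring F] :
    Fˣ ⋊[ringAutToMulAutUnits F] RingAut F →* (F⟦X⟧ →+* F⟦X⟧) where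
  toFun g := (PowerSeries.rescale (g.left : F)).comp (PowerSeries.map g.right)
  map_one' := by
    ext f n
    rw [SemidirectProduct.one_left, SemidirectProduct.one_right]
    simp
  map_mul' g h := by
    ext f n
    rw [SemidirectProduct.mul_left, SemidirectProduct.mul_right]
    simp only [ringAutToMulAutUnits, RingEquiv.toMulEquiv_eq_coe, MonoidHom.coe_mk,
      OneHom.coe_mk, Units.val_mul, Units.coe_mapEquiv, RingEquiv.coe_toMulEquiv,
      RingHom.coe_comp, Function.comp_apply, PowerSeries.coeff_rescale, PowerSeries.coeff_map,
      RingHom.coe_coe, RingAut.mul_apply, RingHom.coe_mul, map_mul, map_pow]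
    ring

theorem coeff_rescaleMapHom {F : Type*} [CommSemiring F]
    (g : Fˣ ⋊[ringAutToMulAutUnits F] RingAut F) (f : F⟦X⟧) (n : ℕ) :
    PowerSeries.coeff n (rescaleMapHom F g f) = g.left ^ n * g.right (PowerSeries.coeff n f) := by
  simp [rescaleMapHom]

theorem rescaleMapHom_injective (F : Type*) [CommSemiring F] :
    Function.Injective (rescaleMapHom F) := by
  intro g h hgh
  have hX := congr(PowerSeries.coeff 1 ($hgh PowerSeries.X))
  have hC (x : F) := congr(PowerSeries.coeff 0 ($hgh (PowerSeries.C x)))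
  simp only [coeff_rescaleMapHom, PowerSeries.coeff_one_X, PowerSeries.coeff_zero_C, pow_zero,
    pow_one, map_one, one_mul, mul_one] at hX hC
  exact SemidirectProduct.ext (Units.ext hX) (RingEquiv.ext hC)

end Rescaling

theorem exists_isGalois_subfield_finrank_eq_card_ringAut_mul_card_units (F : Type*) [Field F]
    [Finite F] :
    ∃ K' : Subfield (LaurentSeries F), FiniteDimensional K' (LaurentSeries F) ∧
      IsGalois K' (LaurentSeries F) ∧
      Module.finrank K' (LaurentSeries F) = Nat.card (RingAut F) * Nat.card Fˣ := by
  have : Finite (RingAut F) := DFunLike.finite _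
  have : Finite (Fˣ ⋊[ringAutToMulAutUnits F] RingAut F) :=
    Finite.of_equiv _ SemidirectProduct.equivProd.symm
  rw [mul_comm, ← SemidirectProduct.card]
  exact exists_isGalois_subfield_finrank_eq_card (LaurentSeries F) (rescaleMapHom_injective F)

theorem card_ringAut (p : ℕ) [Fact p.Prime] (F : Type*) [Field F] [Finite F] [Algebra (ZMod p) F] :
    Nat.card (RingAut F) = Module.finrank (ZMod p) F := by
  rw [← IsGalois.card_aut_eq_finrank]
  have map_algebraMap (g : RingAut F) (a : ZMod p) :
      g (algebraMap (ZMod p) F a) = algebraMap (ZMod p) F a :=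
    congr($(Subsingleton.elim ((g : F →+* F).comp (algebraMap (ZMod p) F)) (algebraMap _ _)) a)
  exact Nat.card_congr
    { toFun g := .ofRingEquiv (f := g) (map_algebraMap g)
      invFun g := g.toRingEquiv
      left_inv _ := rfl
      right_inv _ := rfl }

theorem exists_pow_eq_of_sub_one_mem_maximalIdeal {R : Type*} [CommRing R] [HenselianLocalRing R]
    {N : ℕ} (hN : IsUnit (N : R)) {a : R} (ha : a - 1 ∈ maximalIdeal R) : ∃ b, b ^ N = a := by
  have hN0 : N ≠ 0 := by rintro rfl; simp at hN
  obtain ⟨b, hb, -⟩ := HenselianLocalRing.is_henselian (X ^ N - C a) (monic_X_pow_sub_C a hN0) 1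
    (by simpa using neg_mem ha) (by simpa [derivative_X_pow] using hN)
  exact ⟨b, by simpa [sub_eq_zero] using hb⟩

theorem exists_mem_maximalIdeal_algebraMap_eq_inv {R K : Type*} [CommRing R] [IsDomain R]
    [ValuationRing R] [Field K] [Algebra R K] [IsFractionRing R K] {x : K}
    (hx : x ∉ (algebraMap R K).range) : ∃ s ∈ maximalIdeal R, algebraMap R K s = x⁻¹ := by
  obtain ⟨s, hs⟩ := (ValuationRing.isInteger_or_isInteger R x).resolve_left hx
  refine ⟨s, fun hu ↦ hx ⟨↑hu.unit⁻¹, ?_⟩, hs⟩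
  simp [map_units_inv, hs]

theorem mem_range_algebraMap_of_frequently_exists_pow_eq {R K : Type*} [CommRing R] [IsDomain R]
    [ValuationRing R] [IsNoetherianRing R] [Field K] [Algebra R K] [IsFractionRing R K] {x : K}
    (hx : ∀ n, ∃ N ≥ n, ∃ y : K, y ^ N = x) : x ∈ (algebraMap R K).range := by
  by_contra hxR
  obtain ⟨r, -, hr⟩ := exists_mem_maximalIdeal_algebraMap_eq_inv hxR
  have hmem (n : ℕ) : r ∈ maximalIdeal R ^ n := by
    obtain ⟨N, hN, y, rfl⟩ := hx n
    obtain ⟨s, hs, hsy⟩ := exists_mem_maximalIdeal_algebraMap_eq_inv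
      fun hy ↦ hxR (pow_mem hy N)
    obtain rfl : s ^ N = r := IsFractionRing.injective R K (by rw [map_pow, hsy, hr, inv_pow])
    exact Ideal.pow_le_pow_right hN (Ideal.pow_mem_pow hs N)
  have hr0 : r ∈ (⊥ : Ideal R) :=
    Ideal.iInf_pow_eq_bot_of_isLocalRing _ (maximalIdeal.isMaximal R).ne_top ▸
      Ideal.mem_iInf.mpr hmem
  rw [Ideal.mem_bot.mp hr0, map_zero, eq_comm, inv_eq_zero] at hr
  exact hxR (hr ▸ zero_mem _)

section HenselianFractionField

variable {R : Type*} [CommRing R] [HenselianLocalRing R] [IsDomain R]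
    [ValuationRing R] [IsNoetherianRing R] [Finite (ResidueField R)] {K : Type*} [Field K]
    [Algebra R K] [IsFractionRing R K]

theorem map_mem_range_of_sub_one_mem_maximalIdeal (σ : K →+* K) {f : R}
    (hf : f - 1 ∈ maximalIdeal R) : σ (algebraMap R K f) ∈ (algebraMap R K).range := by
  refine mem_range_algebraMap_of_frequently_exists_pow_eq fun n ↦
    ⟨Nat.card (ResidueField R) * n + 1, by nlinarith [Nat.card_pos (α := ResidueField R)], ?_⟩
  have hunit : IsUnit ((Nat.card (ResidueField R) * n + 1 : ℕ) : R) := by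
    have := Fintype.ofFinite (ResidueField R)
    simp [← residue_ne_zero_iff_isUnit, Nat.card_eq_fintype_card]
  obtain ⟨b, rfl⟩ := exists_pow_eq_of_sub_one_mem_maximalIdeal hunit hf
  exact ⟨σ (algebraMap R K b), by simp⟩

theorem map_mem_range_algebraMap (σ : K →+* K) (f : R) :
    σ (algebraMap R K f) ∈ (algebraMap R K).range := by
  by_cases hf : IsUnit f
  · have hpow : f ^ Nat.card (ResidueField R)ˣ - 1 ∈ maximalIdeal R := by
      have h : Units.map (residue R).toMonoidHom hf.unit ^ Nat.card (ResidueField R)ˣ = 1 :=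
        pow_card_eq_one'
      rw [← residue_eq_zero_iff, map_sub, map_pow, map_one, sub_eq_zero]
      exact congr(($h).val)
    obtain ⟨r, hr⟩ := map_mem_range_of_sub_one_mem_maximalIdeal σ hpow
    rw [map_pow, map_pow] at hr
    exact IsIntegrallyClosed.exists_algebraMap_eq_of_isIntegral_pow Nat.card_pos
      (hr ▸ isIntegral_algebraMap)
  · have h : σ (algebraMap R K (f + 1)) ∈ (algebraMap R K).range :=
      map_mem_range_of_sub_one_mem_maximalIdeal σ (by simpa using hf)
    simpa using sub_mem h (one_mem _)

variable (R K) in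
theorem exists_injective_ringAut_monoidHom :
    ∃ ρ : RingAut K →* (R →+* R), Function.Injective ρ := by
  have hinj := IsFractionRing.injective R K
  choose r hr using fun σ : RingAut K ↦ map_mem_range_algebraMap (R := R) (σ : K →+* K)
  replace hr (σ : RingAut K) (f : R) : algebraMap R K (r σ f) = σ (algebraMap R K f) := hr σ f
  let ρ : RingAut K →* (R →+* R) :=
    { toFun σ :=
        { toFun := r σ
          map_zero' := hinj (by simp [hr])
          map_one' := hinj (by simp [hr])
          map_add' _ _ := hinj (by simp [hr])
          map_mul' _ _ := hinj (by simp [hr]) }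
      map_one' := RingHom.ext fun _ ↦ hinj (hr _ _)
      map_mul' _ _ := RingHom.ext fun _ ↦ hinj (by simp [hr]) }
  have hρ (σ : RingAut K) (f : R) : algebraMap R K (ρ σ f) = σ (algebraMap R K f) := hr σ f
  refine ⟨ρ, fun σ τ h ↦ RingEquiv.toRingHom_injective ?_⟩
  refine IsLocalization.ringHom_ext (nonZeroDivisors R) (RingHom.ext fun f ↦ ?_)
  exact (hρ σ f).symm.trans (h ▸ hρ τ f)

end HenselianFractionField

section Filtration

variable {G R : Type*} [Group G] [CommRing R] [MulSemiringAction G R] {I : Ideal R} {g : G}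

theorem smul_sub_self_mem_pow_succ (h0 : ∀ x, g • x - x ∈ I) (h1 : ∀ x ∈ I, g • x - x ∈ I ^ 2)
    {n : ℕ} {x : R} (hx : x ∈ I ^ n) : g • x - x ∈ I ^ (n + 1) := by
  induction n generalizing x with
  | zero => simpa using h0 x
  | succ n ih =>
    rw [pow_succ] at hx
    induction hx using Submodule.mul_induction_on' with
    | mem_mul_mem a ha b hb =>
      have hgb : g • b ∈ I := by simpa using add_mem (h0 b) hb
      have key : g • (a * b) - a * b = (g • a - a) * g • b + a * (g • b - b) := by
        rw [smul_mul']
        ring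
      rw [key]
      refine add_mem (pow_succ I (n + 1) ▸ Ideal.mul_mem_mul (ih ha) hgb) ?_
      rw [add_assoc, pow_add]
      exact Ideal.mul_mem_mul ha (h1 b hb)
    | add y _ z _ hy hz =>
      rw [smul_add, add_sub_add_comm]
      exact add_mem hy hz

theorem pow_smul_sub_self_sub_nsmul_mem {J : Ideal R} {x : R}
    (h : g • (g • x - x) - (g • x - x) ∈ J) (hJ : ∀ y ∈ J, g • y ∈ J) (j : ℕ) :
    g ^ j • x - x - j • (g • x - x) ∈ J := by
  induction j with
  | zero => simp
  | succ j ih =>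
    have key : g ^ (j + 1) • x - x - (j + 1) • (g • x - x) =
        g • (g ^ j • x - x - j • (g • x - x)) + j • (g • (g • x - x) - (g • x - x)) := by
      simp only [pow_succ', mul_smul, smul_sub, smul_comm g j, succ_nsmul]
      abel
    rw [key]
    exact add_mem (hJ _ ih) (J.nsmul_mem h j)

theorem smul_eq_self_of_pow_eq_one [IsLocalRing R] [IsNoetherianRing R] {N : ℕ}
    (hN : IsUnit (N : R)) (hg : g ^ N = 1) (h0 : ∀ x, g • x - x ∈ maximalIdeal R)
    (h1 : ∀ x ∈ maximalIdeal R, g • x - x ∈ maximalIdeal R ^ 2) (x : R) : g • x = x := by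
  have hmem (n : ℕ) : g • x - x ∈ maximalIdeal R ^ n := by
    induction n with
    | zero => simp
    | succ n ih =>
      have hJ (y) (hy : y ∈ maximalIdeal R ^ (n + 1)) : g • y ∈ maximalIdeal R ^ (n + 1) := by
        simpa using add_mem
          (Ideal.pow_le_pow_right (n + 1).le_succ (smul_sub_self_mem_pow_succ h0 h1 hy)) hy
      have h := pow_smul_sub_self_sub_nsmul_mem (smul_sub_self_mem_pow_succ h0 h1 ih) hJ N
      rw [hg, one_smul, sub_self, zero_sub, neg_mem_iff, nsmul_eq_mul] at h
      exact (Ideal.unit_mul_mem_iff_mem _ hN).mp h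
  rw [← sub_eq_zero, ← Ideal.mem_bot,
    ← Ideal.iInf_pow_eq_bot_of_isLocalRing _ (maximalIdeal.isMaximal R).ne_top]
  exact Ideal.mem_iInf.mpr hmem

end Filtration

section Inertia

variable {G R : Type*} [Group G] [CommRing R] [MulSemiringAction G R]

theorem ker_toRingAut_residueField [IsLocalRing R] :
    (MulSemiringAction.toRingAut G (ResidueField R)).ker = (maximalIdeal R).inertia G := by
  ext g
  simp only [MonoidHom.mem_ker, RingEquiv.ext_iff, residue_surjective.forall,
    AddSubgroup.mem_inertia]
  refine forall_congr' fun x ↦ ?_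
  exact sub_eq_zero.symm.trans (residue_eq_zero_iff (g • x - x))

variable [IsDomain R] [IsDiscreteValuationRing R] {ϖ : R} (hϖ : Irreducible ϖ)

include hϖ in
theorem exists_unit_mul_eq_smul (g : G) : ∃ u : Rˣ, u * ϖ = g • ϖ := by
  have hg : Irreducible (g • ϖ) := hϖ.map (MulSemiringAction.toRingEquiv G R g)
  obtain ⟨u, hu⟩ := IsDiscreteValuationRing.associated_of_irreducible R hϖ hg
  exact ⟨u, by rw [mul_comm, hu]⟩

theorem residue_smul_of_mem_inertia {g : G} (hg : g ∈ (maximalIdeal R).inertia G) (x : R) :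
    residue R (g • x) = residue R x := by
  rw [← sub_eq_zero, ← map_sub, residue_eq_zero_iff]
  exact hg x

/-- The unit `g ϖ / ϖ`. -/
noncomputable def smulDivUnit (g : G) : Rˣ := (exists_unit_mul_eq_smul hϖ g).choose

theorem smulDivUnit_mul (g : G) : smulDivUnit hϖ g * ϖ = g • ϖ :=
  (exists_unit_mul_eq_smul hϖ g).choose_spec

theorem coe_smulDivUnit_eq {g : G} {u : R} (hu : u * ϖ = g • ϖ) : (smulDivUnit hϖ g : R) = u :=
  mul_right_cancel₀ hϖ.ne_zero ((smulDivUnit_mul hϖ g).trans hu.symm)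

/-- The tame character `g ↦ residue (g ϖ / ϖ)` of the inertia subgroup. -/
noncomputable def tameCharacter : (maximalIdeal R).inertia G →* (ResidueField R)ˣ where
  toFun g := Units.map (residue R).toMonoidHom (smulDivUnit hϖ g.1)
  map_one' := Units.ext <| by simp [coe_smulDivUnit_eq hϖ (g := (1 : G)) (u := 1)]
  map_mul' g h := Units.ext <| by
    have hgh : g.1 • (smulDivUnit hϖ h.1 : R) * smulDivUnit hϖ g.1 * ϖ = (g.1 * h.1) • ϖ := by
      rw [mul_assoc, smulDivUnit_mul, ← smul_mul', smulDivUnit_mul, mul_smul]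
    simp [coe_smulDivUnit_eq hϖ hgh, residue_smul_of_mem_inertia g.2, mul_comm]

theorem smul_sub_self_mem_sq_of_tameCharacter_eq_one {g : (maximalIdeal R).inertia G}
    (hg : tameCharacter hϖ g = 1) {x : R} (hx : x ∈ maximalIdeal R) :
    g • x - x ∈ maximalIdeal R ^ 2 := by
  have hu : (smulDivUnit hϖ g.1 : R) - 1 ∈ maximalIdeal R := by
    rw [← residue_eq_zero_iff, map_sub, map_one, sub_eq_zero]
    exact congr(($hg).val)
  have hϖm : ϖ ∈ maximalIdeal R := hϖ.not_isUnit
  obtain ⟨y, rfl⟩ := Ideal.mem_span_singleton.mp (hϖ.maximalIdeal_eq ▸ hx)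
  have key : g • (ϖ * y) - ϖ * y =
      (smulDivUnit hϖ g.1 - 1) * (ϖ * g • y) + ϖ * (g • y - y) := by
    rw [smul_mul', show g • ϖ = _ from (smulDivUnit_mul hϖ g.1).symm]
    ring
  rw [key, sq]
  exact add_mem (Ideal.mul_mem_mul hu (Ideal.mul_mem_right _ _ hϖm))
    (Ideal.mul_mem_mul hϖm (g.2 y))

theorem isPGroup_ker_tameCharacter [Finite G] [FaithfulSMul G R] (p : ℕ) [Fact p.Prime]
    [CharP (ResidueField R) p] : IsPGroup p (tameCharacter (G := G) hϖ).ker := by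
  intro g
  obtain ⟨k, N, hN, hord⟩ := Nat.exists_eq_pow_mul_and_not_dvd (orderOf_pos g).ne' p
    (Fact.out : p.Prime).ne_one
  have hunit : IsUnit (N : R) := by
    rwa [← residue_ne_zero_iff_isUnit, map_natCast, Ne, CharP.cast_eq_zero_iff _ p]
  set h := g ^ p ^ k
  refine ⟨k, Subtype.ext <| Subtype.ext <| FaithfulSMul.eq_of_smul_eq_smul fun x : R ↦ ?_⟩
  rw [OneMemClass.coe_one, OneMemClass.coe_one, one_smul]
  refine smul_eq_self_of_pow_eq_one (g := (h : G)) hunit ?_ h.1.2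
    (fun x ↦ smul_sub_self_mem_sq_of_tameCharacter_eq_one hϖ h.2) x
  have : h ^ N = 1 := by rw [← pow_mul, ← hord, pow_orderOf_eq_one]
  exact congr(($this : G))

variable (G R) in
theorem exists_card_dvd_card_ringAut_mul_card_units_mul_pow [Finite G] [FaithfulSMul G R] (p : ℕ)
    [Fact p.Prime] [CharP (ResidueField R) p] : ∃ a, Nat.card G ∣
      Nat.card (RingAut (ResidueField R)) * Nat.card (ResidueField R)ˣ * p ^ a := by
  obtain ⟨ϖ, hϖ⟩ := IsDiscreteValuationRing.exists_irreducible R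
  obtain ⟨a, ha⟩ := IsPGroup.iff_card.mp (isPGroup_ker_tameCharacter (G := G) hϖ p)
  have hunram : ((maximalIdeal R).inertia G).index ∣ Nat.card (RingAut (ResidueField R)) := by
    rw [← ker_toRingAut_residueField, Subgroup.index_ker]
    exact Subgroup.card_subgroup_dvd_card _
  have htame : (tameCharacter (G := G) hϖ).ker.index ∣ Nat.card (ResidueField R)ˣ := by
    rw [Subgroup.index_ker]
    exact Subgroup.card_subgroup_dvd_card _
  refine ⟨a, ?_⟩
  rw [← Subgroup.index_mul_card ((maximalIdeal R).inertia G),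
    ← Subgroup.index_mul_card (tameCharacter hϖ).ker, ha, ← mul_assoc]
  exact mul_dvd_mul_right (mul_dvd_mul hunram htame) _

end Inertia

theorem exists_finrank_dvd_of_isGalois (R : Type*) {K : Type*} [CommRing R] [IsDomain R]
    [IsDiscreteValuationRing R] [HenselianLocalRing R] [Finite (ResidueField R)] [Field K]
    [Algebra R K] [IsFractionRing R K] (p : ℕ) [Fact p.Prime] [CharP (ResidueField R) p]
    (K' : Subfield K) [FiniteDimensional K' K] [IsGalois K' K] :
    ∃ a, Module.finrank K' K ∣
      Nat.card (RingAut (ResidueField R)) * Nat.card (ResidueField R)ˣ * p ^ a := by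
  obtain ⟨ρ, hρ⟩ := exists_injective_ringAut_monoidHom R K
  let := MulSemiringAction.compHom R (ρ.comp (MulSemiringAction.toRingAut Gal(K/K') K))
  have : FaithfulSMul Gal(K/K') R := ⟨fun {g h} hgh ↦ FaithfulSMul.eq_of_smul_eq_smul fun x : K ↦
    congr($(hρ (RingHom.ext hgh)) x)⟩
  exact IsGalois.card_aut_eq_finrank K' K ▸
    exists_card_dvd_card_ringAut_mul_card_units_mul_pow Gal(K/K') R p

theorem exists_finrank_dvd_of_isGalois_laurentSeries {F : Type*} [Field F] [Finite F] (p : ℕ)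
    [Fact p.Prime] [Algebra (ZMod p) F] (K' : Subfield (LaurentSeries F))
    [FiniteDimensional K' (LaurentSeries F)] [IsGalois K' (LaurentSeries F)] :
    ∃ a, Module.finrank K' (LaurentSeries F) ∣
      Module.finrank (ZMod p) F * (Nat.card F - 1) * p ^ a := by
  let e : F ≃+* ResidueField (PowerSeries F) := PowerSeries.residueFieldOfPowerSeries.symm
  have : Finite (ResidueField (PowerSeries F)) := .of_equiv F e
  let e' : F ≃ₐ[ZMod p] ResidueField (PowerSeries F) := .ofRingEquiv (f := e) fun a ↦
    congr($(Subsingleton.elim ((e : F →+* _).comp (algebraMap (ZMod p) F)) (algebraMap _ _)) a)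
  have : CharP (ResidueField (PowerSeries F)) p :=
    charP_of_injective_algebraMap (algebraMap (ZMod p) _).injective p
  rw [e'.toLinearEquiv.finrank_eq, ← card_ringAut, Nat.card_congr e'.toEquiv, ← Nat.card_units]
  exact exists_finrank_dvd_of_isGalois (PowerSeries F) p K'

theorem coprime_of_forall_gcd_mul_pow_dvd {d n q : ℕ} (hn : n ≠ 0)
    (h : ∀ s, Nat.gcd (n * d) (q ^ s) ∣ n) : Nat.Coprime d q := by
  have hpow (s : ℕ) : Nat.gcd d q ^ s ∣ n := by
    induction s with
    | zero => simp
    | succ s ih =>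
      exact (Nat.dvd_gcd (mul_dvd_mul ih (Nat.gcd_dvd_left d q))
        (pow_dvd_pow_of_dvd (Nat.gcd_dvd_right d q) (s + 1))).trans (h (s + 1))
  by_contra hg
  obtain ⟨s, hs⟩ := Nat.finiteMultiplicity_iff.mpr ⟨hg, Nat.pos_of_ne_zero hn⟩
  exact hs (hpow (s + 1))

theorem gcd_mul_dvd_of_coprime {c d m n : ℕ} (hdc : Nat.Coprime d c)
    (h : Nat.gcd (n * d) m ∣ n) : Nat.gcd (n * d) (m * c) ∣ n := by
  rw [Nat.dvd_iff_prime_pow_dvd_dvd]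
  intro q e hq hqe
  obtain ⟨hnd, hmc⟩ := Nat.dvd_gcd_iff.mp hqe
  by_cases hqc : q ∣ c
  · exact ((hdc.coprime_dvd_right hqc).symm.pow_left e).dvd_of_dvd_mul_right hnd
  · have hm := (((hq.coprime_iff_not_dvd).mpr hqc).pow_left e).dvd_of_dvd_mul_right hmc
    exact (Nat.dvd_gcd hnd hm).trans h

theorem divisibility_condition_laurent_general (p : ℕ) [Fact p.Prime] (F : Type*) [Field F]
    [Finite F] [Algebra (ZMod p) F] {d n : ℕ} (hn : 0 < n) :
    (∀ K' : Subfield (LaurentSeries F), FiniteDimensional K' (LaurentSeries F) →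
        IsGalois K' (LaurentSeries F) →
        Nat.gcd (n * d) (Module.finrank K' (LaurentSeries F)) ∣ n) ↔
      Nat.gcd d p = 1 ∧
        Nat.gcd (n * d) (Module.finrank (ZMod p) F * (Nat.card F - 1)) ∣ n := by
  constructor
  · refine fun h ↦ ⟨?_, ?_⟩
    · have hp : p ∣ Nat.card F := by
        rw [Module.natCard_eq_pow_finrank (K := ZMod p), Nat.card_zmod]
        exact dvd_pow_self p Module.finrank_pos.ne'
      refine Nat.Coprime.coprime_dvd_right hp (coprime_of_forall_gcd_mul_pow_dvd hn.ne' fun s ↦ ?_)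
      obtain ⟨K', hfin, hgal, hrank⟩ := exists_isGalois_subfield_finrank_eq_card_pow F s
      exact hrank ▸ h K' hfin hgal
    · obtain ⟨K', hfin, hgal, hrank⟩ :=
        exists_isGalois_subfield_finrank_eq_card_ringAut_mul_card_units F
      rw [← card_ringAut, ← Nat.card_units, ← hrank]
      exact h K' hfin hgal
  · rintro ⟨hdp, hdvd⟩ K' hfin hgal
    obtain ⟨a, ha⟩ := exists_finrank_dvd_of_isGalois_laurentSeries p K'
    exact (Nat.gcd_dvd_gcd_of_dvd_right _ ha).trans
      (gcd_mul_dvd_of_coprime (.pow_right a hdp) hdvd)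

/-- Let `K = 𝔽_{p^i}((T))`, `D` a central division algebra of degree `d`
over `K` and `n ≥ 1`. Then `gcd(nd, [K:K'])` divides `n` for every subfield `K' ≤ K` with
`K/K'` finite Galois if and only if `gcd(d, p) = 1` and `gcd(nd, i(p^i − 1))` divides `n`. -/
theorem divisibility_condition_laurent (p : ℕ) [Fact p.Prime] (i : ℕ) (hi : 0 < i)
    (d n : ℕ) (hd : 0 < d) (hn : 0 < n)
    (D : Type) [DivisionRing D] [Algebra (LaurentSeries (GaloisField p i)) D]
    (hdeg : Module.finrank (LaurentSeries (GaloisField p i)) D = d * d)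
    (hcentral : Subalgebra.center (LaurentSeries (GaloisField p i)) D = ⊥) :
    (∀ K' : Subfield (LaurentSeries (GaloisField p i)),
        FiniteDimensional ↥K' (LaurentSeries (GaloisField p i)) →
        IsGalois ↥K' (LaurentSeries (GaloisField p i)) →
        Nat.gcd (n * d) (Module.finrank ↥K' (LaurentSeries (GaloisField p i))) ∣ n)
      ↔ (Nat.gcd d p = 1 ∧ Nat.gcd (n * d) (i * (p ^ i - 1)) ∣ n) := by
  simpa only [GaloisField.finrank p hi.ne', GaloisField.card p i hi.ne'] using
    divisibility_condition_laurent_general p (GaloisField p i) (d := d) hn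
end

section
/- Let S_3 act on a set of three objects {l_3, l_3', l_3''} being the three conjugate non-normal cubic subextensions of an S_3-Galois extension l/k. Then any field automorphism β of l_3 with β(k) = k extends uniquely to an automorphism β₀ of l with β₀(k) = k such that β₀ commutes with every element of Gal(l/k). -/
/-!
Let `l` be the normal closure of `L/k` and let `β` be an automorphism of `L` restricting to `σ` on
`k`. Since `l` with `k` acting through `σ` is normal and contains `L`, `σ` extends to an
automorphism `φ` of `l`, and `φ` permutes the `k`-embeddings `j : L → l` by `j ↦ φ ∘ j ∘ β⁻¹`.
When `Gal(l/k)` induces every permutation of the embeddings, some `γ` in it induces this one, and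
then `γ⁻¹ ∘ φ` intertwines `β` with every `j`. Intertwining the inclusion of `L` says that `γ⁻¹ ∘
φ` extends `β`, and intertwining all conjugates of the inclusion says in addition that it commutes
with `Gal(l/k)`. It is unique because the images of the embeddings generate `l`.

For an `S₃`-extension the Galois group acts faithfully on the three embeddings of `l₃`, so it
induces all `3! = 6` permutations.
-/

open Module IntermediateField

section MapRange

variable {k M : Type*} [CommRing k] [Ring M] [Algebra k M]

theorem exists_ringEquiv_algebraMap_of_map_range_eq [FaithfulSMul k M] {β : M ≃+* M}
    (h : Subring.map β.toRingHom (algebraMap k M).range = (algebraMap k M).range) :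
    ∃ σ : k ≃+* k, ∀ a, β (algebraMap k M a) = algebraMap k M (σ a) := by
  let e : k ≃+* (algebraMap k M).range := RingEquiv.ofBijective (algebraMap k M).rangeRestrict
    ⟨fun _ _ hab => FaithfulSMul.algebraMap_injective k M (congrArg Subtype.val hab),
      (algebraMap k M).rangeRestrict_surjective⟩
  have algebraMap_e_symm (y : (algebraMap k M).range) : algebraMap k M (e.symm y) = y :=
    congrArg Subtype.val (e.apply_symm_apply y)
  refine ⟨e.trans (β.subringMap.trans ((RingEquiv.subringCongr h).trans e.symm)), fun a => ?_⟩
  simp only [RingEquiv.trans_apply, algebraMap_e_symm]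
  rfl

theorem map_range_algebraMap_eq_of_forall_algebraMap {β : M ≃+* M} {σ : k ≃+* k}
    (h : ∀ a, β (algebraMap k M a) = algebraMap k M (σ a)) :
    Subring.map β.toRingHom (algebraMap k M).range = (algebraMap k M).range := by
  have comp_eq : β.toRingHom.comp (algebraMap k M) = (algebraMap k M).comp σ.toRingHom :=
    RingHom.ext h
  rw [RingHom.map_range, comp_eq, ← RingHom.map_range, RingHom.range_eq_top.2 σ.surjective,
    RingHom.range_eq_map]

end MapRange

section EmbeddingPerm

variable {k L M : Type*} [CommSemiring k] [Semiring L] [Semiring M] [Algebra k L] [Algebra k M]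

theorem symm_algebraMap_of_forall_algebraMap {k' L' : Type*} [CommSemiring k'] [Semiring L']
    [Algebra k' L'] {β : L ≃+* L'} {σ : k ≃+* k'}
    (h : ∀ a, β (algebraMap k L a) = algebraMap k' L' (σ a)) (b : k') :
    β.symm (algebraMap k' L' b) = algebraMap k L (σ.symm b) := by
  rw [RingEquiv.symm_apply_eq, h, RingEquiv.apply_symm_apply]

variable (k L M) in
/-- The permutation representation of `Gal(M/k)` on the `k`-embeddings of `L` into `M`, by
composition on the left. -/
def embeddingPermHom : (M ≃ₐ[k] M) →* Equiv.Perm (L →ₐ[k] M) where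
  toFun γ := AlgEquiv.refl.arrowCongr γ
  map_one' := rfl
  map_mul' _ _ := rfl

theorem embeddingPermHom_apply_apply (γ : M ≃ₐ[k] M) (j : L →ₐ[k] M) (x : L) :
    embeddingPermHom k L M γ j x = γ (j x) := rfl

/-- The permutation `j ↦ φ ∘ j ∘ β⁻¹` of the `k`-embeddings of `L` into `M` induced by
automorphisms `β` of `L` and `φ` of `M` that restrict to the same automorphism `σ` of `k`. -/
def semilinearConj {σ : k ≃+* k} {β : L ≃+* L} {φ : M ≃+* M}
    (hβ : ∀ a, β (algebraMap k L a) = algebraMap k L (σ a))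
    (hφ : ∀ a, φ (algebraMap k M a) = algebraMap k M (σ a)) : Equiv.Perm (L →ₐ[k] M) where
  toFun j :=
    { (φ : M →+* M).comp ((j : L →+* M).comp β.symm) with
      commutes' a := by simp [symm_algebraMap_of_forall_algebraMap hβ, hφ] }
  invFun j :=
    { (φ.symm : M →+* M).comp ((j : L →+* M).comp β) with
      commutes' a := by simp [symm_algebraMap_of_forall_algebraMap hφ, hβ] }
  left_inv j := by ext x; simp
  right_inv j := by ext x; simp

theorem semilinearConj_apply_apply {σ : k ≃+* k} {β : L ≃+* L} {φ : M ≃+* M}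
    (hβ : ∀ a, β (algebraMap k L a) = algebraMap k L (σ a))
    (hφ : ∀ a, φ (algebraMap k M a) = algebraMap k M (σ a)) (j : L →ₐ[k] M) (x : L) :
    semilinearConj hβ hφ j x = φ (j (β.symm x)) := rfl

theorem exists_ringEquiv_apply_algHom_eq {σ : k ≃+* k} {β : L ≃+* L} {φ : M ≃+* M}
    (hsurj : Function.Surjective (embeddingPermHom k L M))
    (hβ : ∀ a, β (algebraMap k L a) = algebraMap k L (σ a))
    (hφ : ∀ a, φ (algebraMap k M a) = algebraMap k M (σ a)) :
    ∃ ψ : M ≃+* M, ∀ (j : L →ₐ[k] M) (x : L), ψ (j x) = j (β x) := by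
  obtain ⟨γ, hγ⟩ := hsurj (semilinearConj hβ hφ)
  refine ⟨φ.trans γ.symm.toRingEquiv, fun j x => γ.symm_apply_eq.2 ?_⟩
  calc φ (j x) = semilinearConj hβ hφ j (β x) := by
        rw [semilinearConj_apply_apply, RingEquiv.symm_apply_apply]
    _ = γ (j (β x)) := by rw [← hγ, embeddingPermHom_apply_apply]

end EmbeddingPerm

section NormalClosure

variable {k L l : Type*} [Field k] [Field L] [Field l] [Algebra k L] [Algebra k l]

theorem nonempty_algHom_of_isNormalClosure [Algebra.IsAlgebraic k L] [h : IsNormalClosure k L l] :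
    Nonempty (L →ₐ[k] l) :=
  nonempty_algHom_of_splits fun x => ⟨Algebra.IsIntegral.isIntegral x, h.splits x⟩

variable (k L) in
theorem ringHomClass_ext_of_isNormalClosure [Algebra.IsAlgebraic k L] [IsNormalClosure k L l]
    {F R : Type*} [Semiring R] [FunLike F l R] [RingHomClass F l R] {f g : F}
    (h : ∀ (j : L →ₐ[k] l) (x : L), f (j x) = g (j x)) : f = g := by
  obtain ⟨j₀⟩ := nonempty_algHom_of_isNormalClosure (k := k) (L := L) (l := l)
  let eqLocus : IntermediateField k l :=
    ((f : l →+* R).eqLocusField g).toIntermediateField fun a =>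
      RingHom.mem_eqLocusField.2 <| j₀.commutes a ▸ h j₀ (algebraMap k L a)
  have normalClosure_le : normalClosure k L l ≤ eqLocus :=
    normalClosure_le_iff.2 fun j => by rintro _ ⟨x, rfl⟩; exact h j x
  have normalClosure_eq_top : normalClosure k L l = ⊤ :=
    (Algebra.IsAlgebraic.isNormalClosure_iff.1 inferInstance).2
  exact DFunLike.ext f g fun y => normalClosure_le (normalClosure_eq_top ▸ mem_top)

theorem embeddingPermHom_injective [Algebra.IsAlgebraic k L] [IsNormalClosure k L l] :
    Function.Injective (embeddingPermHom k L l) := fun _ _ h =>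
  ringHomClass_ext_of_isNormalClosure k L fun j x =>
    DFunLike.congr_fun (DFunLike.congr_fun h j) x

section Extension

variable {k' L' l' : Type*} [Field k'] [Field L'] [Field l'] [Algebra k' L'] [Algebra k' l']

theorem exists_ringHom_semilinear_of_isNormalClosure [IsNormalClosure k L l] [Normal k' l']
    {σ : k ≃+* k'} {f : L →+* l'} (hf : ∀ a, f (algebraMap k L a) = algebraMap k' l' (σ a)) :
    ∃ φ : l →+* l', ∀ a, φ (algebraMap k l a) = algebraMap k' l' (σ a) := by
  -- Over `k` acting on `l'` through `σ`, semilinear maps become `k`-linear.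
  let : Algebra k l' := ((algebraMap k' l').comp σ.toRingHom).toAlgebra
  have : Normal k l' := Normal.of_equiv_equiv (f := σ.symm) (g := RingEquiv.refl l') <|
    RingHom.ext fun a => congrArg (algebraMap k' l') (σ.apply_symm_apply a)
  let fₐ : L →ₐ[k] l' := { f with commutes' := hf }
  have splits (x : L) : ((minpoly k x).map (algebraMap k l')).Splits :=
    minpoly.algHom_eq fₐ fₐ.injective x ▸ Normal.splits this (fₐ x)
  let φ : l →ₐ[k] l' := IsNormalClosure.lift splits
  exact ⟨φ, φ.commutes⟩

theorem exists_ringEquiv_semilinear_of_isNormalClosure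
    [Algebra.IsAlgebraic k L] [Algebra.IsAlgebraic k' L']
    [hl : IsNormalClosure k L l] [hl' : IsNormalClosure k' L' l'] {σ : k ≃+* k'} {β : L ≃+* L'}
    (hβ : ∀ a, β (algebraMap k L a) = algebraMap k' L' (σ a)) :
    ∃ φ : l ≃+* l', ∀ a, φ (algebraMap k l a) = algebraMap k' l' (σ a) := by
  have := hl.normal
  have := hl'.normal
  obtain ⟨j⟩ := nonempty_algHom_of_isNormalClosure (k := k) (L := L) (l := l)
  obtain ⟨j'⟩ := nonempty_algHom_of_isNormalClosure (k := k') (L := L') (l := l')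
  obtain ⟨φ, hφ⟩ := exists_ringHom_semilinear_of_isNormalClosure (l := l) (σ := σ)
    (f := (j' : L' →+* l').comp (β : L →+* L')) fun a => by simp [hβ]
  obtain ⟨ψ, hψ⟩ := exists_ringHom_semilinear_of_isNormalClosure (l := l') (σ := σ.symm)
    (f := (j : L →+* l).comp (β.symm : L' →+* L)) fun a => by
      simp [symm_algebraMap_of_forall_algebraMap hβ]
  let φψ : l' →ₐ[k'] l' := { φ.comp ψ with commutes' := fun a => by simp [hφ, hψ] }
  have φ_surjective : Function.Surjective φ :=
    Function.Surjective.of_comp (Algebra.IsAlgebraic.algHom_bijective φψ).surjective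
  exact ⟨RingEquiv.ofBijective φ ⟨φ.injective, φ_surjective⟩, hφ⟩

end Extension

theorem existsUnique_ringEquiv_apply_algHom_eq [Algebra.IsAlgebraic k L] [IsNormalClosure k L l]
    (hsurj : Function.Surjective (embeddingPermHom k L l)) {σ : k ≃+* k} {β : L ≃+* L}
    (hβ : ∀ a, β (algebraMap k L a) = algebraMap k L (σ a)) :
    ∃! φ : l ≃+* l, ∀ (j : L →ₐ[k] l) (x : L), φ (j x) = j (β x) := by
  obtain ⟨φ, hφ⟩ := exists_ringEquiv_semilinear_of_isNormalClosure (l := l) (l' := l) hβ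
  refine existsUnique_of_exists_of_unique (exists_ringEquiv_apply_algHom_eq hsurj hβ hφ)
    fun φ₁ φ₂ h₁ h₂ => ringHomClass_ext_of_isNormalClosure k L fun j x =>
      (h₁ j x).trans (h₂ j x).symm

end NormalClosure

section SubextensionEmbeddings

variable {k l : Type*} [Field k] [Field l] [Algebra k l] {L : IntermediateField k l}

theorem exists_algEquiv_apply_eq_algHom [Normal k l] (j : L →ₐ[k] l) :
    ∃ γ : l ≃ₐ[k] l, ∀ x : L, γ x = j x := by
  obtain ⟨γ, hγ⟩ := exists_algHom_of_splits
    (fun y : l => ⟨Algebra.IsIntegral.isIntegral y, Normal.splits inferInstance y⟩) j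
  exact ⟨AlgEquiv.ofBijective γ (AlgHom.normal_bijective k l l γ), DFunLike.congr_fun hγ⟩

theorem forall_apply_algHom_eq_iff_extends_and_commutes [h : IsNormalClosure k L l]
    {β : L ≃+* L} {φ : l ≃+* l} :
    (∀ (j : L →ₐ[k] l) (x : L), φ (j x) = j (β x)) ↔
      (∀ x : L, φ x = β x) ∧ ∀ (γ : l ≃ₐ[k] l) (x : l), φ (γ x) = γ (φ x) := by
  have := h.normal
  constructor
  · refine fun hφ => ⟨hφ L.val, fun γ => DFunLike.congr_fun <|
      ringHomClass_ext_of_isNormalClosure k L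
        (f := γ.toRingEquiv.trans φ) (g := φ.trans γ.toRingEquiv) fun j x => ?_⟩
    calc φ (γ (j x)) = γ (j (β x)) := hφ (γ.toAlgHom.comp j) x
      _ = γ (φ (j x)) := by rw [hφ]
  · rintro ⟨hext, hcomm⟩ j x
    obtain ⟨γ, hγ⟩ := exists_algEquiv_apply_eq_algHom j
    rw [← hγ, hcomm, hext, hγ]

theorem isNormalClosure_of_not_normal_of_finrank_prime [Normal k l] (hL : ¬ Normal k L)
    (hp : (finrank L l).Prime) : IsNormalClosure k L l := by
  have := isSimpleOrder_of_finrank_prime L l hp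
  have hle := le_normalClosure L
  refine Algebra.IsAlgebraic.isNormalClosure_iff.2 ⟨fun x => ?_, ?_⟩
  · exact minpoly.algHom_eq L.val L.val.injective x ▸ Normal.splits inferInstance (x : l)
  rcases eq_bot_or_eq_top (extendScalars hle) with hbot | htop
  · have normalClosure_eq : normalClosure k L l = L := by
      rw [← extendScalars_restrictScalars hle, hbot, restrictScalars_bot_eq_self]
    exact absurd (normalClosure_eq ▸ normalClosure.normal k L l) hL
  · rw [← extendScalars_restrictScalars hle, htop, restrictScalars_top]

theorem isNormalClosure_of_not_normal_of_finrank_eq_two_mul [FiniteDimensional k L] [Normal k l]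
    (hL : ¬ Normal k L) (hfinrank : finrank k l = 2 * finrank k L) : IsNormalClosure k L l := by
  have finrank_eq_two : finrank L l = 2 := Nat.eq_of_mul_eq_mul_left (finrank_pos (R := k) (M := L))
    (by rw [finrank_mul_finrank, hfinrank, mul_comm])
  exact isNormalClosure_of_not_normal_of_finrank_prime hL (finrank_eq_two ▸ Nat.prime_two)

theorem embeddingPermHom_surjective_of_finrank_eq_factorial [Algebra.IsSeparable k l]
    [h : IsNormalClosure k L l] (hcard : finrank k l = (finrank k L).factorial) :
    Function.Surjective (embeddingPermHom k L l) := by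
  have : FiniteDimensional k l := .of_finrank_pos (hcard ▸ Nat.factorial_pos _)
  have : IsGalois k l := { to_normal := h.normal }
  have card_embeddings : Nat.card (L →ₐ[k] l) = finrank k L :=
    AlgHom.natCard_of_splits k L l h.splits
  refine ((Nat.bijective_iff_injective_and_card _).2 ⟨embeddingPermHom_injective, ?_⟩).surjective
  rw [IsGalois.card_aut_eq_finrank, hcard, Nat.card_perm, card_embeddings]

end SubextensionEmbeddings

theorem finrank_eq_factorial_of_mulEquiv_perm {k l : Type*} [Field k] [Field l] [Algebra k l]
    [FiniteDimensional k l] [IsGalois k l] {n : ℕ} (e : (l ≃ₐ[k] l) ≃* Equiv.Perm (Fin n)) :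
    finrank k l = n.factorial := by
  rw [← IsGalois.card_aut_eq_finrank, Nat.card_congr e.toEquiv, Nat.card_perm, Nat.card_fin]

theorem unique_commuting_extension_S3_general {k l : Type*} [Field k] [Field l] [Algebra k l]
    (L : IntermediateField k l) [h : IsNormalClosure k L l]
    (hsurj : Function.Surjective (embeddingPermHom k L l)) (β : L ≃+* L)
    (hβk : Subring.map β.toRingHom (algebraMap k L).range = (algebraMap k L).range) :
    ∃! β₀ : l ≃+* l,
      (∀ x : L, β₀ (x : l) = ((β x : L) : l)) ∧
      Subring.map β₀.toRingHom (algebraMap k l).range = (algebraMap k l).range ∧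
      ∀ (γ : l ≃ₐ[k] l) (x : l), β₀ (γ x) = γ (β₀ x) := by
  have := h.normal
  obtain ⟨σ, hσ⟩ := exists_ringEquiv_algebraMap_of_map_range_eq hβk
  obtain ⟨β₀, hβ₀, hunique⟩ := existsUnique_ringEquiv_apply_algHom_eq hsurj hσ
  obtain ⟨hext, hcomm⟩ := forall_apply_algHom_eq_iff_extends_and_commutes.1 hβ₀
  have β₀_algebraMap (a : k) : β₀ (algebraMap k l a) = algebraMap k l (σ a) :=
    (hext (algebraMap k L a)).trans (congrArg Subtype.val (hσ a))
  exact ⟨β₀, ⟨hext, map_range_algebraMap_eq_of_forall_algebraMap β₀_algebraMap, hcomm⟩,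
    fun β₁ ⟨hext₁, _, hcomm₁⟩ =>
      hunique β₁ (forall_apply_algHom_eq_iff_extends_and_commutes.2 ⟨hext₁, hcomm₁⟩)⟩

/-- Let `l/k` be an `S₃`-Galois extension and `l₃` one of the three
conjugate non-normal cubic subextensions of `l/k`. Then any field automorphism `β` of `l₃`
with `β(k) = k` extends uniquely to an automorphism `β₀` of `l` with `β₀(k) = k` commuting
with every element of `Gal(l/k)`. -/
theorem unique_commuting_extension_S3
    (k l : Type*) [Field k] [Field l] [Algebra k l] [FiniteDimensional k l] [IsGalois k l]
    (hS3 : Nonempty ((l ≃ₐ[k] l) ≃* Equiv.Perm (Fin 3)))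
    (l3 : IntermediateField k l) (h3 : Module.finrank k ↥l3 = 3)
    (hnonnormal : ¬ Normal k ↥l3)
    (β : ↥l3 ≃+* ↥l3)
    (hβk : Subring.map β.toRingHom (algebraMap k ↥l3).range = (algebraMap k ↥l3).range) :
    ∃! β₀ : l ≃+* l,
      (∀ x : ↥l3, β₀ (x : l) = ((β x : ↥l3) : l)) ∧
      Subring.map β₀.toRingHom (algebraMap k l).range = (algebraMap k l).range ∧
      ∀ (γ : l ≃ₐ[k] l) (x : l), β₀ (γ x) = γ (β₀ x) := by
  have hkl := finrank_eq_factorial_of_mulEquiv_perm hS3.some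
  have := isNormalClosure_of_not_normal_of_finrank_eq_two_mul hnonnormal (by rw [hkl, h3]; rfl)
  exact unique_commuting_extension_S3_general l3
    (embeddingPermHom_surjective_of_finrank_eq_factorial (h3 ▸ hkl)) β hβk
end
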